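/- arXiv:math/0611742 — 2 statements merged into one kernel-verified Lean document; each statement's English description precedes it below -/
import Mathlib

section
/- Let (A_1,m_1) and (A_2,m_2) be multiarrangements in V_1 = K^{ℓ_1} and V_2 = K^{ℓ_2} respectively. Then for every k, under the identification of Der^k(S) with ⊕_{i+j=k} Der^i(S_1) ⊗_K Der^j(S_2), one has D^k((A_1,m_1)×(A_2,m_2)) = ⊕_{i+j=k} D^i(A_1,m_1) ⊗_K D^j(A_2,m_2). -/
/-!
Write `S = K[X, Y]` with `S₁ = K[X]` and `S₂ = K[Y]`.

A multi-derivation of a polynomial ring is determined by its values on monotone tuples of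
indeterminates (`IsMultiDerAlong.ext`), and it equals `∑_u θ(X_u) ∂_u`, where `u` runs over the
strictly monotone tuples and `∂_u` is the determinant of partial derivatives `wedgePDeriv u`. The
same formula defines the extension `θ ⊗ 1` of a multi-derivation of `S₁` or `S₂` to `S`
(`extendDer`). An extension in the sense of `IsExt1` or `IsExt2` is prescribed on products of an
element of `S₁` and an element of `S₂`, and these span `S`; hence it is unique, and `prodPiece` is
spanned by the wedges of the explicit extensions (`prodPiece_le`).

*Independence of the pieces.* An extension from `S₁` vanishes as soon as one argument lies in `S₂`,
and vice versa. So a wedge of an extension from `S₁` in degree `p` with one from `S₂` vanishes on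
every tuple of indeterminates in which the number of entries from `S₁` is not `p`
(`altWedge_extendDer_X_eq_zero`), which separates the pieces.

*Each piece lies in `D^k` of the product.* The extension of an element of `D^p(𝒜₁)` satisfies the
divisibility condition for the hyperplanes of `𝒜₁` (`extendDer_mem_span`) and vanishes on the forms
of `𝒜₂`; symmetrically for `𝒜₂`. Each term of the wedge product therefore satisfies all
conditions (`prodPiece_le_Dp`).

*`D^k` of the product is the sum of the pieces.* Let `θ` be in `D^{p+q}` of the product. Freezing
the last `q` arguments in `S₂` and taking the coefficient of `Y^β` gives an element of `D^p(𝒜₁)`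
(`slice₁_mem`); freezing the first `p` arguments in `S₁` and taking the coefficient of `X^α` gives
an element of `D^q(𝒜₂)` (`slice₂_mem`). The component of `θ` of bidegree `(p, q)` is
`∑_{β, w} c_{β, w} ∧ Y^β ∂_w` with `c_{β, w} ∈ D^p(𝒜₁)` slices of the first kind. A `K`-linear
projection onto `D^q(𝒜₂)`, applied to the factors `Y^β ∂_w`, does not alter this sum, because the
slices of the second kind are already in `D^q(𝒜₂)`; after the projection the sum is visibly in the
piece (`exists_component`). This is the identity `(M₁ ⊗ N₂) ∩ (N₁ ⊗ M₂) = M₁ ⊗ M₂` for subspaces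
`M₁ ⊆ N₁` and `M₂ ⊆ N₂`.
-/

open MvPolynomial

noncomputable section

/-- The linear form (degree-one polynomial) associated to a linear functional on `K^ℓ`. -/
def formPoly {K : Type*} [Field K] {ℓ : ℕ} (φ : Module.Dual K (Fin ℓ → K)) :
    MvPolynomial (Fin ℓ) K :=
  ∑ i : Fin ℓ, MvPolynomial.C (φ (Pi.single i 1)) * MvPolynomial.X i

/-- A multiarrangement of hyperplanes in `K^ℓ`: a finite set of (pairwise distinct)
hyperplanes, recorded by nonzero defining linear functionals with pairwise distinct
kernels, together with a positive multiplicity attached to each hyperplane. -/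
structure MultiArr (K : Type*) [Field K] (ℓ : ℕ) where
  duals : Finset (Module.Dual K (Fin ℓ → K))
  ne_zero : ∀ φ ∈ duals, φ ≠ 0
  distinct_ker : ∀ φ ∈ duals, ∀ ψ ∈ duals, φ ≠ ψ → LinearMap.ker φ ≠ LinearMap.ker ψ
  mult : Module.Dual K (Fin ℓ → K) → ℕ
  mult_pos : ∀ φ ∈ duals, 0 < mult φ

variable {K : Type*} [Field K] {ℓ : ℕ}

/-- `Der^p(S)`-condition: an alternating `p`-multilinear map is a `K`-derivation in each
variable. -/
def IsMultiDer {p : ℕ}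
    (θ : (MvPolynomial (Fin ℓ) K) [⋀^Fin p]→ₗ[K] (MvPolynomial (Fin ℓ) K)) : Prop :=
  ∀ (i : Fin p) (v : Fin p → MvPolynomial (Fin ℓ) K) (f g : MvPolynomial (Fin ℓ) K),
    θ (Function.update v i (f * g)) =
      f * θ (Function.update v i g) + g * θ (Function.update v i f)

/-- The module of `p`-derivations `D^p(𝒜,m)` of a multiarrangement, as a submodule of the
alternating `p`-multilinear maps (for `p = 0` this is all of `S ≅ Der^0(S)`). -/
def Dp (A : MultiArr K ℓ) (p : ℕ) :
    Submodule (MvPolynomial (Fin ℓ) K)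
      ((MvPolynomial (Fin ℓ) K) [⋀^Fin p]→ₗ[K] (MvPolynomial (Fin ℓ) K)) where
  carrier := {θ | IsMultiDer θ ∧ ∀ φ ∈ A.duals, ∀ v : Fin p → MvPolynomial (Fin ℓ) K,
    ∀ i : Fin p, v i = formPoly φ → θ v ∈ Ideal.span {formPoly φ ^ A.mult φ}}
  add_mem' := by
    rintro θ η ⟨hθ, hθ'⟩ ⟨hη, hη'⟩
    refine ⟨fun i v f g => ?_, fun φ hφ v i hv => ?_⟩
    · simp only [AlternatingMap.add_apply, hθ i v f g, hη i v f g]; ring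
    · simpa using add_mem (hθ' φ hφ v i hv) (hη' φ hφ v i hv)
  zero_mem' := by
    refine ⟨fun i v f g => by simp, fun φ hφ v i hv => by simp⟩
  smul_mem' := by
    rintro c θ ⟨hθ, hθ'⟩
    refine ⟨fun i v f g => ?_, fun φ hφ v i hv => ?_⟩
    · simp only [AlternatingMap.smul_apply, smul_eq_mul, hθ i v f g]; ring
    · simpa using Ideal.mul_mem_left _ c (hθ' φ hφ v i hv)

/-- The wedge product `Der^p(S) × Der^q(S) → Der^{p+q}(S)`. -/
def altWedge {p q : ℕ}
    (φ : (MvPolynomial (Fin ℓ) K) [⋀^Fin p]→ₗ[K] (MvPolynomial (Fin ℓ) K))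
    (ψ : (MvPolynomial (Fin ℓ) K) [⋀^Fin q]→ₗ[K] (MvPolynomial (Fin ℓ) K)) :
    (MvPolynomial (Fin ℓ) K) [⋀^Fin (p + q)]→ₗ[K] (MvPolynomial (Fin ℓ) K) :=
  (((LinearMap.mul' K (MvPolynomial (Fin ℓ) K)).compAlternatingMap
    (φ.domCoprod ψ))).domDomCongr finSumFinEquiv

variable {ℓ₁ ℓ₂ : ℕ}

/-- `θ'` is the canonical extension of `θ ∈ Der^i(S₁)` to `Der^i(S)` under the
identification `S = S₁ ⊗[K] S₂` (that is, `θ' = θ ⊗ 1`). -/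
def IsExt1 {i : ℕ}
    (θ : (MvPolynomial (Fin ℓ₁) K) [⋀^Fin i]→ₗ[K] (MvPolynomial (Fin ℓ₁) K))
    (θ' : (MvPolynomial (Fin (ℓ₁ + ℓ₂)) K) [⋀^Fin i]→ₗ[K] (MvPolynomial (Fin (ℓ₁ + ℓ₂)) K)) :
    Prop :=
  ∀ (a : Fin i → MvPolynomial (Fin ℓ₁) K) (b : Fin i → MvPolynomial (Fin ℓ₂) K),
    θ' (fun j => MvPolynomial.rename (Fin.castAdd ℓ₂) (a j) *
          MvPolynomial.rename (Fin.natAdd ℓ₁) (b j)) =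
      MvPolynomial.rename (Fin.castAdd ℓ₂) (θ a) *
        MvPolynomial.rename (Fin.natAdd ℓ₁) (∏ j, b j)

/-- `η'` is the canonical extension of `η ∈ Der^j(S₂)` to `Der^j(S)` under the
identification `S = S₁ ⊗[K] S₂` (that is, `η' = 1 ⊗ η`). -/
def IsExt2 {j : ℕ}
    (η : (MvPolynomial (Fin ℓ₂) K) [⋀^Fin j]→ₗ[K] (MvPolynomial (Fin ℓ₂) K))
    (η' : (MvPolynomial (Fin (ℓ₁ + ℓ₂)) K) [⋀^Fin j]→ₗ[K] (MvPolynomial (Fin (ℓ₁ + ℓ₂)) K)) :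
    Prop :=
  ∀ (a : Fin j → MvPolynomial (Fin ℓ₁) K) (b : Fin j → MvPolynomial (Fin ℓ₂) K),
    η' (fun s => MvPolynomial.rename (Fin.castAdd ℓ₂) (a s) *
          MvPolynomial.rename (Fin.natAdd ℓ₁) (b s)) =
      MvPolynomial.rename (Fin.castAdd ℓ₂) (∏ s, a s) *
        MvPolynomial.rename (Fin.natAdd ℓ₁) (η b)

/-- The image of `D^i(𝒜₁,m₁) ⊗ D^{k-i}(𝒜₂,m₂)` inside `Der^k(S)`, namely the
`S`-span of the wedges `θ' ∧ η'` of the canonical extensions of `θ ∈ D^i(𝒜₁,m₁)` and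
`η ∈ D^{k-i}(𝒜₂,m₂)`. -/
def prodPiece (A₁ : MultiArr K ℓ₁) (A₂ : MultiArr K ℓ₂) (k i : ℕ) :
    Submodule (MvPolynomial (Fin (ℓ₁ + ℓ₂)) K)
      ((MvPolynomial (Fin (ℓ₁ + ℓ₂)) K) [⋀^Fin k]→ₗ[K] (MvPolynomial (Fin (ℓ₁ + ℓ₂)) K)) :=
  Submodule.span (MvPolynomial (Fin (ℓ₁ + ℓ₂)) K)
    {ξ | ∃ (e : i + (k - i) = k)
      (θ' : (MvPolynomial (Fin (ℓ₁ + ℓ₂)) K) [⋀^Fin i]→ₗ[K] (MvPolynomial (Fin (ℓ₁ + ℓ₂)) K))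
      (η' : (MvPolynomial (Fin (ℓ₁ + ℓ₂)) K) [⋀^Fin (k - i)]→ₗ[K]
        (MvPolynomial (Fin (ℓ₁ + ℓ₂)) K)),
      (∃ θ ∈ Dp A₁ i, IsExt1 θ θ') ∧ (∃ η ∈ Dp A₂ (k - i), IsExt2 η η') ∧
        ξ = (altWedge θ' η').domDomCongr (finCongr e)}

/-! ### Multi-derivations along an algebra map and wedges of partial derivatives -/

/-- An alternating `K`-multilinear map on a polynomial ring which is a derivation in each
variable, where the target is a module over the source through the algebra map `ρ`. -/
def IsMultiDerAlong {σ A : Type*} [CommRing A] [Algebra K A] {p : ℕ}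
    (ρ : MvPolynomial σ K →ₐ[K] A) (F : (MvPolynomial σ K) [⋀^Fin p]→ₗ[K] A) : Prop :=
  ∀ (i : Fin p) (v : Fin p → MvPolynomial σ K) (f g : MvPolynomial σ K),
    F (Function.update v i (f * g)) =
      ρ f * F (Function.update v i g) + ρ g * F (Function.update v i f)

lemma isMultiDer_iff {p : ℕ}
    (θ : (MvPolynomial (Fin ℓ) K) [⋀^Fin p]→ₗ[K] (MvPolynomial (Fin ℓ) K)) :
    IsMultiDer θ ↔ IsMultiDerAlong (AlgHom.id K _) θ := Iff.rfl

section Along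

variable {σ A : Type*} [CommRing A] [Algebra K A] {p : ℕ}
  {ρ : MvPolynomial σ K →ₐ[K] A} {F G : (MvPolynomial σ K) [⋀^Fin p]→ₗ[K] A}

lemma IsMultiDerAlong.map_one (hF : IsMultiDerAlong ρ F) (v : Fin p → MvPolynomial σ K)
    (i : Fin p) : F (Function.update v i 1) = 0 := by
  have := hF i v 1 1
  simpa using this

lemma IsMultiDerAlong.eq_zero_of_eq_one (hF : IsMultiDerAlong ρ F)
    (v : Fin p → MvPolynomial σ K) (i : Fin p) (h : v i = 1) : F v = 0 := by
  have := hF.map_one v i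
  rwa [← h, Function.update_eq_self] at this

/-- A derivation in each variable is controlled by its values on the indeterminates: if all
values on tuples which consist of indeterminates outside a set `T` of slots, and of prescribed
entries `v₀` in `T`, lie in an ideal `J`, then so do the values on all tuples which agree with
`v₀` on `T`. -/
lemma IsMultiDerAlong.mem_of_forall_X (hF : IsMultiDerAlong ρ F) (J : Ideal A)
    (T : Set (Fin p)) (v₀ : Fin p → MvPolynomial σ K)
    (h : ∀ v : Fin p → MvPolynomial σ K, (∀ t ∈ T, v t = v₀ t) →
      (∀ t ∉ T, ∃ i, v t = X i) → F v ∈ J)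
    (v : Fin p → MvPolynomial σ K) (hv : ∀ t ∈ T, v t = v₀ t) : F v ∈ J := by
  classical
  suffices H : ∀ (s : Finset (Fin p)), (∀ t ∈ s, t ∉ T) →
      ∀ v : Fin p → MvPolynomial σ K, (∀ t ∈ T, v t = v₀ t) →
      (∀ t ∉ T, t ∉ s → ∃ i, v t = X i) → F v ∈ J from
    H (Finset.univ.filter fun t => t ∉ T) (by simp) v hv (by simp; tauto)
  intro s
  induction s using Finset.induction_on with
  | empty => intro _ v h1 h2; exact h v h1 fun t ht => h2 t ht (by simp)
  | insert a s ha ih =>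
    intro hs v h1 h2
    have haT : a ∉ T := hs a (by simp)
    suffices H : ∀ f : MvPolynomial σ K, F (Function.update v a f) ∈ J by
      simpa using H (v a)
    intro f
    induction f using MvPolynomial.induction_on with
    | C c =>
      have : (C c : MvPolynomial σ K) = c • 1 := by rw [smul_eq_C_mul, mul_one]
      rw [this, F.map_update_smul, hF.map_one, smul_zero]
      exact J.zero_mem
    | add f g hf hg => rw [F.map_update_add]; exact J.add_mem hf hg
    | mul_X f i hf =>
      rw [hF]
      refine J.add_mem (J.mul_mem_left _ ?_) (J.mul_mem_left _ hf)
      refine ih (fun t ht => hs t (by simp [ht])) _ (fun t ht => ?_) (fun t ht hts => ?_)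
      · rw [Function.update_of_ne (by rintro rfl; exact haT ht)]; exact h1 t ht
      · rcases eq_or_ne t a with rfl | hta
        · exact ⟨i, by simp⟩
        · rw [Function.update_of_ne hta]
          exact h2 t ht (by simp [hta, hts])

lemma IsMultiDerAlong.sub (hF : IsMultiDerAlong ρ F) (hG : IsMultiDerAlong ρ G) :
    IsMultiDerAlong ρ (F - G) := by
  intro i v f g
  simp only [AlternatingMap.sub_apply, hF i v f g, hG i v f g]; ring

lemma IsMultiDerAlong.add (hF : IsMultiDerAlong ρ F) (hG : IsMultiDerAlong ρ G) :
    IsMultiDerAlong ρ (F + G) := by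
  intro i v f g
  simp only [AlternatingMap.add_apply, hF i v f g, hG i v f g]; ring

lemma IsMultiDerAlong.smul (hF : IsMultiDerAlong ρ F) (c : A) :
    IsMultiDerAlong ρ (c • F) := by
  intro i v f g
  simp only [AlternatingMap.smul_apply, hF i v f g, smul_eq_mul]; ring

lemma IsMultiDerAlong.zero : IsMultiDerAlong ρ (0 : (MvPolynomial σ K) [⋀^Fin p]→ₗ[K] A) := by
  intro i v f g
  simp

lemma IsMultiDerAlong.sum {κ : Type*} (s : Finset κ)
    (f : κ → (MvPolynomial σ K) [⋀^Fin p]→ₗ[K] A) (h : ∀ x ∈ s, IsMultiDerAlong ρ (f x)) :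
    IsMultiDerAlong ρ (∑ x ∈ s, f x) := by
  classical
  induction s using Finset.induction_on with
  | empty => simpa using IsMultiDerAlong.zero
  | insert a s ha ih =>
    rw [Finset.sum_insert ha]
    exact (h a (by simp)).add (ih fun x hx => h x (by simp [hx]))

/-- Since alternating maps only change sign under permutations of the arguments, monotone tuples
of indeterminates suffice to determine a multi-derivation. -/
lemma IsMultiDerAlong.ext [LinearOrder σ]
    (hF : IsMultiDerAlong ρ F) (hG : IsMultiDerAlong ρ G)
    (h : ∀ u : Fin p → σ, Monotone u → F (fun t => X (u t)) = G (fun t => X (u t))) :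
    F = G := by
  ext v
  have h1 := (hF.sub hG).mem_of_forall_X ⊥ ∅ v (fun w _ hw => ?_) v (by simp)
  · rwa [Ideal.mem_bot, AlternatingMap.sub_apply, sub_eq_zero] at h1
  simp only [Set.mem_empty_iff_false, not_false_eq_true, forall_const] at hw
  choose u hu using hw
  obtain rfl : w = fun t => X (u t) := funext hu
  have h2 : (F - G) ((fun t => X (u t)) ∘ Tuple.sort u) = 0 := by
    rw [AlternatingMap.sub_apply, sub_eq_zero]
    exact h _ (Tuple.monotone_sort u)
  rw [AlternatingMap.map_perm, smul_eq_zero_iff_eq] at h2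
  exact h2

end Along

/-- The multi-derivation `∂_{u 0} ∧ ⋯ ∧ ∂_{u (p-1)}`, whose value at `v` is the determinant of
the matrix of the partial derivatives `∂_{u s} (v t)`. -/
def wedgePDeriv {p : ℕ} (u : Fin p → Fin ℓ) :
    (MvPolynomial (Fin ℓ) K) [⋀^Fin p]→ₗ[K] (MvPolynomial (Fin ℓ) K) where
  toFun v := Matrix.det (Matrix.of fun t s => pderiv (u s) (v t))
  map_update_add' := by
    intro _ v i x y
    obtain rfl := Subsingleton.elim ‹DecidableEq (Fin p)› (instDecidableEqFin p)
    have H : ∀ x, (Matrix.of fun t s => pderiv (u s) (Function.update v i x t)) =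
        (Matrix.of fun t s => pderiv (u s) (v t)).updateRow i (fun s => pderiv (u s) x) := by
      intro x; ext1 t s
      rcases eq_or_ne t i with rfl | h <;> simp [Matrix.updateRow_apply, *]
    rw [H, H, H, ← Matrix.det_updateRow_add]
    congr 2; ext1 s; simp
  map_update_smul' := by
    intro _ v i c x
    obtain rfl := Subsingleton.elim ‹DecidableEq (Fin p)› (instDecidableEqFin p)
    have H : ∀ x, (Matrix.of fun t s => pderiv (u s) (Function.update v i x t)) =
        (Matrix.of fun t s => pderiv (u s) (v t)).updateRow i (fun s => pderiv (u s) x) := by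
      intro x; ext1 t s
      rcases eq_or_ne t i with rfl | h <;> simp [Matrix.updateRow_apply, *]
    rw [H, H, smul_eq_C_mul, smul_eq_C_mul, ← Matrix.det_updateRow_smul]
    congr 2; ext1 s; simp
  map_eq_zero_of_eq' := by
    intro v i j h hij
    exact Matrix.det_zero_of_row_eq hij (by ext1 s; simp [h])

section WedgePDeriv

variable {p : ℕ} (u : Fin p → Fin ℓ)

lemma wedgePDeriv_apply (v : Fin p → MvPolynomial (Fin ℓ) K) :
    wedgePDeriv u v = Matrix.det (Matrix.of fun t s => pderiv (u s) (v t)) := rfl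

lemma wedgePDeriv_isMultiDerAlong :
    IsMultiDerAlong (AlgHom.id K _) (wedgePDeriv (K := K) u) := by
  intro i v f g
  have H : ∀ x, (Matrix.of fun t s => pderiv (u s) (Function.update v i x t)) =
      (Matrix.of fun t s => pderiv (u s) (v t)).updateRow i (fun s => pderiv (u s) x) := by
    intro x; ext1 t s
    rcases eq_or_ne t i with rfl | h <;> simp [Matrix.updateRow_apply, *]
  simp only [wedgePDeriv_apply, H, AlgHom.id_apply]
  rw [← Matrix.det_updateRow_smul, ← Matrix.det_updateRow_smul, ← Matrix.det_updateRow_add]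
  congr 2; ext1 s; simp

lemma wedgePDeriv_eq_zero (v : Fin p → MvPolynomial (Fin ℓ) K) (t : Fin p)
    (h : ∀ s, pderiv (u s) (v t) = 0) : wedgePDeriv u v = 0 :=
  Matrix.det_eq_zero_of_row_eq_zero t fun s => by simpa using h s

lemma wedgePDeriv_mul (v c : Fin p → MvPolynomial (Fin ℓ) K)
    (h : ∀ s t, pderiv (u s) (c t) = 0) :
    wedgePDeriv u (fun t => v t * c t) = (∏ t, c t) * wedgePDeriv u v := by
  rw [wedgePDeriv_apply, wedgePDeriv_apply, ← Matrix.det_mul_column]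
  congr 1; ext1 t s
  simp [h]

/-- The maps `wedgePDeriv u` with `u` strictly monotone are dual to the strictly monotone tuples
of indeterminates. -/
lemma wedgePDeriv_X (hu : StrictMono u) (w : Fin p → Fin ℓ) (hw : Monotone w) :
    wedgePDeriv (K := K) u (fun t => X (w t)) = if u = w then 1 else 0 := by
  split_ifs with h
  · subst h
    rw [wedgePDeriv_apply, ← Matrix.det_one (n := Fin p)]
    congr 1; ext1 t s
    simp [pderiv_X, Pi.single_apply, Matrix.one_apply, hu.injective.eq_iff]
  · by_contra hne
    have hinj : Function.Injective w := by
      intro t t' htt'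
      by_contra htt
      exact hne ((wedgePDeriv u).map_eq_zero_of_eq _ (by simp [htt']) htt)
    have hsub : Set.range w ⊆ Set.range u := by
      rintro _ ⟨t, rfl⟩
      by_contra hr
      refine hne (wedgePDeriv_eq_zero u _ t fun s => pderiv_X_of_ne ?_)
      rintro h
      exact hr ⟨s, h.symm⟩
    refine h ((StrictMono.range_inj hu (hw.strictMono_of_injective hinj)).1 ?_)
    symm
    refine Set.eq_of_subset_of_ncard_le hsub ?_
    rw [← Set.image_univ, ← Set.image_univ, Set.ncard_image_of_injective _ hinj,
      Set.ncard_image_of_injective _ hu.injective]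

end WedgePDeriv

/-! ### Extension of multi-derivations to a larger polynomial ring -/

lemma alternatingMap_sum_apply {κ M N : Type*} [AddCommGroup M] [Module K M] [AddCommGroup N]
    [Module K N] {p : ℕ} (s : Finset κ) (f : κ → M [⋀^Fin p]→ₗ[K] N) (v : Fin p → M) :
    (∑ x ∈ s, f x) v = ∑ x ∈ s, f x v := by
  classical
  induction s using Finset.induction_on with
  | empty => simp
  | insert a s ha ih => simp [Finset.sum_insert ha, ih]

open Classical in
/-- The extension `θ ⊗ 1` of a multi-derivation `θ` along the inclusion of polynomial rings
induced by `ι`, written in terms of the values of `θ` on the strictly monotone tuples of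
indeterminates: `∑_u θ(X_u) ∂_{ι u}`. -/
def extendDer {n p : ℕ} (ι : Fin ℓ → Fin n)
    (θ : (MvPolynomial (Fin ℓ) K) [⋀^Fin p]→ₗ[K] (MvPolynomial (Fin ℓ) K)) :
    (MvPolynomial (Fin n) K) [⋀^Fin p]→ₗ[K] (MvPolynomial (Fin n) K) :=
  ∑ u ∈ Finset.univ.filter (fun u : Fin p → Fin ℓ => StrictMono u),
    rename ι (θ fun t => X (u t)) • wedgePDeriv fun t => ι (u t)

section ExtendDer

variable {n p : ℕ} {ι : Fin ℓ → Fin n}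
  (θ : (MvPolynomial (Fin ℓ) K) [⋀^Fin p]→ₗ[K] (MvPolynomial (Fin ℓ) K))

lemma extendDer_apply (v : Fin p → MvPolynomial (Fin n) K) [DecidablePred
      (fun u : Fin p → Fin ℓ => StrictMono u)] :
    extendDer ι θ v = ∑ u ∈ Finset.univ.filter (fun u : Fin p → Fin ℓ => StrictMono u),
      rename ι (θ fun t => X (u t)) * wedgePDeriv (fun t => ι (u t)) v := by
  rw [extendDer, alternatingMap_sum_apply]
  simp only [AlternatingMap.smul_apply, smul_eq_mul]
  congr!

variable (ι) in
lemma extendDer_isMultiDer : IsMultiDerAlong (AlgHom.id K _) (extendDer ι θ) :=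
  IsMultiDerAlong.sum _ _ fun _ _ => (wedgePDeriv_isMultiDerAlong _).smul _

lemma extendDer_eq_zero (v : Fin p → MvPolynomial (Fin n) K) (t : Fin p)
    (h : ∀ i, pderiv (ι i) (v t) = 0) : extendDer ι θ v = 0 := by
  classical
  rw [extendDer_apply]
  refine Finset.sum_eq_zero fun u _ => ?_
  rw [wedgePDeriv_eq_zero _ v t fun s => h _, mul_zero]

/-- Linearity of `extendDer ι θ` over elements on which all partial derivatives in the direction
of `ι` vanish. -/
lemma extendDer_mul (v c : Fin p → MvPolynomial (Fin n) K)
    (h : ∀ i t, pderiv (ι i) (c t) = 0) :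
    extendDer ι θ (fun t => v t * c t) = (∏ t, c t) * extendDer ι θ v := by
  classical
  rw [extendDer_apply, extendDer_apply, Finset.mul_sum]
  refine Finset.sum_congr rfl fun u _ => ?_
  rw [wedgePDeriv_mul _ _ _ fun s t => h _ t]; ring

lemma extendDer_X (hι : StrictMono ι) (w : Fin p → Fin ℓ) (hw : Monotone w) :
    extendDer ι θ (fun t => X (ι (w t))) = rename ι (θ fun t => X (w t)) := by
  classical
  rw [extendDer_apply]
  have H : ∀ u : Fin p → Fin ℓ, StrictMono u → wedgePDeriv (K := K) (fun t => ι (u t))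
      (fun t => X (ι (w t))) = if u = w then 1 else 0 := by
    intro u hu
    rw [wedgePDeriv_X (fun t => ι (u t)) (hι.comp hu) (fun t => ι (w t))
      (hι.monotone.comp hw)]
    congr 1
    simp only [funext_iff, hι.injective.eq_iff]
  rw [Finset.sum_congr rfl fun u hu => by rw [H u (Finset.mem_filter.1 hu).2]]
  simp only [mul_ite, mul_one, mul_zero, Finset.sum_ite_eq', Finset.mem_filter,
    Finset.mem_univ, true_and]
  split_ifs with h
  · rfl
  · -- a monotone tuple that is not strictly monotone has a repeated entry
    have : ¬ Function.Injective w := fun hi => h (hw.strictMono_of_injective hi)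
    simp only [Function.Injective, not_forall] at this
    obtain ⟨a, b, hab, hne⟩ := this
    rw [θ.map_eq_zero_of_eq _ (by simp [hab]) hne, map_zero]

/-- `extendDer ι θ` restricts to `θ` on the smaller polynomial ring: both sides are
multi-derivations along `rename ι`, and they agree on the indeterminates. -/
lemma extendDer_rename (hθ : IsMultiDer θ) (hι : StrictMono ι)
    (a : Fin p → MvPolynomial (Fin ℓ) K) :
    extendDer ι θ (fun t => rename ι (a t)) = rename ι (θ a) := by
  have h1 : IsMultiDerAlong (rename ι)
      ((extendDer ι θ).compLinearMap (rename ι : _ →ₐ[K] _).toLinearMap) := by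
    intro i v f g
    simp only [AlternatingMap.compLinearMap_apply, AlgHom.toLinearMap_apply]
    have := extendDer_isMultiDer ι θ i (fun t => rename ι (v t)) (rename ι f) (rename ι g)
    simp only [AlgHom.id_apply, ← map_mul] at this
    have H : ∀ x, (fun t => (rename ι (Function.update v i x t) : MvPolynomial (Fin n) K)) =
        Function.update (fun t => rename ι (v t)) i (rename ι x) := by
      intro x; ext1 t
      rcases eq_or_ne t i with rfl | h <;> simp [*]
    rw [H, H, H]; exact this
  have h2 : IsMultiDerAlong (rename ι)
      ((rename ι : _ →ₐ[K] MvPolynomial (Fin n) K).toLinearMap.compAlternatingMap θ) := by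
    intro i v f g
    simp only [LinearMap.compAlternatingMap_apply, AlgHom.toLinearMap_apply, hθ i v f g,
      map_add, map_mul]
  have h3 := h1.ext h2 fun u hu => by
    simp only [AlternatingMap.compLinearMap_apply, AlgHom.toLinearMap_apply, rename_X,
      LinearMap.compAlternatingMap_apply]
    exact extendDer_X θ hι u hu
  exact DFunLike.congr_fun h3 a

/-- The expansion of a multi-derivation in terms of the partial derivatives. -/
lemma extendDer_id (hθ : IsMultiDer θ) : extendDer id θ = θ := by
  ext1 v
  simpa using extendDer_rename θ hθ strictMono_id v

end ExtendDer

lemma pderiv_rename_of_notMem {n : ℕ} (ι : Fin ℓ → Fin n) (i : Fin n) (h : ∀ j, ι j ≠ i)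
    (f : MvPolynomial (Fin ℓ) K) : pderiv i (rename ι f) = 0 := by
  induction f using MvPolynomial.induction_on with
  | C c => simp
  | add f g hf hg => simp [hf, hg]
  | mul_X f j hf => simp [hf, pderiv_X_of_ne (h j)]

lemma castAdd_ne_natAdd (i : Fin ℓ₁) (j : Fin ℓ₂) : Fin.castAdd ℓ₂ i ≠ Fin.natAdd ℓ₁ j := by
  intro h
  have := congrArg Fin.val h
  simp at this; omega

lemma extendDer_isExt1 {p : ℕ}
    (θ : (MvPolynomial (Fin ℓ₁) K) [⋀^Fin p]→ₗ[K] (MvPolynomial (Fin ℓ₁) K))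
    (hθ : IsMultiDer θ) : IsExt1 (ℓ₂ := ℓ₂) θ (extendDer (Fin.castAdd ℓ₂) θ) := by
  intro a b
  rw [extendDer_mul, extendDer_rename θ hθ (Fin.strictMono_castAdd ℓ₂), map_prod, mul_comm]
  intro i t
  exact pderiv_rename_of_notMem _ _ (fun j => (castAdd_ne_natAdd i j).symm) _

lemma extendDer_isExt2 {p : ℕ}
    (θ : (MvPolynomial (Fin ℓ₂) K) [⋀^Fin p]→ₗ[K] (MvPolynomial (Fin ℓ₂) K))
    (hθ : IsMultiDer θ) : IsExt2 (ℓ₁ := ℓ₁) θ (extendDer (Fin.natAdd ℓ₁) θ) := by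
  intro a b
  simp only [mul_comm (rename (Fin.castAdd ℓ₂) (a _))]
  rw [extendDer_mul, extendDer_rename θ hθ (Fin.strictMono_natAdd ℓ₁), map_prod]
  intro i t
  exact pderiv_rename_of_notMem _ _ (fun j => castAdd_ne_natAdd j i) _

lemma monomial_eq_rename_mul_rename (s : Fin (ℓ₁ + ℓ₂) →₀ ℕ) :
    (monomial s 1 : MvPolynomial (Fin (ℓ₁ + ℓ₂)) K) =
      rename (Fin.castAdd ℓ₂) (∏ i, X i ^ s (Fin.castAdd ℓ₂ i)) *
        rename (Fin.natAdd ℓ₁) (∏ i, X i ^ s (Fin.natAdd ℓ₁ i)) := by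
  rw [monomial_eq, C_1, one_mul, Finsupp.prod_fintype _ _ (by simp), Fin.prod_univ_add]
  simp

/-- An alternating map on `S` is determined by its values on tuples of products `a * b` with
`a ∈ S₁` and `b ∈ S₂`. -/
lemma alternating_ext_mul {p : ℕ} {A : Type*} [AddCommGroup A] [Module K A]
    {F G : (MvPolynomial (Fin (ℓ₁ + ℓ₂)) K) [⋀^Fin p]→ₗ[K] A}
    (h : ∀ (a : Fin p → MvPolynomial (Fin ℓ₁) K) (b : Fin p → MvPolynomial (Fin ℓ₂) K),
      F (fun j => rename (Fin.castAdd ℓ₂) (a j) * rename (Fin.natAdd ℓ₁) (b j)) =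
        G (fun j => rename (Fin.castAdd ℓ₂) (a j) * rename (Fin.natAdd ℓ₁) (b j))) :
    F = G := by
  refine Module.Basis.ext_alternating (basisMonomials (Fin (ℓ₁ + ℓ₂)) K) fun v _ => ?_
  simp only [coe_basisMonomials, monomial_eq_rename_mul_rename]
  exact h _ _

lemma linear_ext_mul {A : Type*} [AddCommGroup A] [Module K A]
    {F G : (MvPolynomial (Fin (ℓ₁ + ℓ₂)) K) →ₗ[K] A}
    (h : ∀ (a : MvPolynomial (Fin ℓ₁) K) (b : MvPolynomial (Fin ℓ₂) K),
      F (rename (Fin.castAdd ℓ₂) a * rename (Fin.natAdd ℓ₁) b) =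
        G (rename (Fin.castAdd ℓ₂) a * rename (Fin.natAdd ℓ₁) b)) :
    F = G := by
  refine (basisMonomials (Fin (ℓ₁ + ℓ₂)) K).ext fun s => ?_
  simp only [coe_basisMonomials, monomial_eq_rename_mul_rename]
  exact h _ _

/-- The defining property of an extension determines it on a spanning set, so the extension of a
multi-derivation is unique. -/
lemma IsExt1.eq_extendDer {p : ℕ}
    {θ : (MvPolynomial (Fin ℓ₁) K) [⋀^Fin p]→ₗ[K] (MvPolynomial (Fin ℓ₁) K)}
    {θ' : (MvPolynomial (Fin (ℓ₁ + ℓ₂)) K) [⋀^Fin p]→ₗ[K] (MvPolynomial (Fin (ℓ₁ + ℓ₂)) K)}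
    (h : IsExt1 θ θ') (hθ : IsMultiDer θ) : θ' = extendDer (Fin.castAdd ℓ₂) θ :=
  alternating_ext_mul fun a b => by rw [h, extendDer_isExt1 θ hθ]

lemma IsExt2.eq_extendDer {p : ℕ}
    {θ : (MvPolynomial (Fin ℓ₂) K) [⋀^Fin p]→ₗ[K] (MvPolynomial (Fin ℓ₂) K)}
    {θ' : (MvPolynomial (Fin (ℓ₁ + ℓ₂)) K) [⋀^Fin p]→ₗ[K] (MvPolynomial (Fin (ℓ₁ + ℓ₂)) K)}
    (h : IsExt2 θ θ') (hθ : IsMultiDer θ) : θ' = extendDer (Fin.natAdd ℓ₁) θ :=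
  alternating_ext_mul fun a b => by rw [h, extendDer_isExt2 θ hθ]

/-! ### Wedge products of extensions -/

/-- The contribution of the permutation `σ` to the wedge product `φ ∧ ψ`. -/
def wedgeTerm {p q : ℕ}
    (φ : (MvPolynomial (Fin ℓ) K) [⋀^Fin p]→ₗ[K] (MvPolynomial (Fin ℓ) K))
    (ψ : (MvPolynomial (Fin ℓ) K) [⋀^Fin q]→ₗ[K] (MvPolynomial (Fin ℓ) K))
    (σ : Equiv.Perm (Fin p ⊕ Fin q)) (v : Fin (p + q) → MvPolynomial (Fin ℓ) K) :
    MvPolynomial (Fin ℓ) K :=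
  Equiv.Perm.sign σ • (φ (fun i => v (finSumFinEquiv (σ (Sum.inl i)))) *
    ψ (fun j => v (finSumFinEquiv (σ (Sum.inr j)))))

section Wedge

variable {p q : ℕ}
    (φ : (MvPolynomial (Fin ℓ) K) [⋀^Fin p]→ₗ[K] (MvPolynomial (Fin ℓ) K))
    (ψ : (MvPolynomial (Fin ℓ) K) [⋀^Fin q]→ₗ[K] (MvPolynomial (Fin ℓ) K))

lemma altWedge_apply (v : Fin (p + q) → MvPolynomial (Fin ℓ) K) :
    altWedge φ ψ v = ∑ σ : Equiv.Perm.ModSumCongr (Fin p) (Fin q),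
      LinearMap.mul' K _ (AlternatingMap.domCoprod.summand φ ψ σ
        (fun x => v (finSumFinEquiv x))) := by
  have h := congrArg (fun F => F (fun x => v (finSumFinEquiv x)))
    (AlternatingMap.domCoprod_coe φ ψ)
  simp only [sum_apply] at h
  rw [← map_sum, ← h]
  rfl

lemma summand_mk (v : Fin (p + q) → MvPolynomial (Fin ℓ) K) (σ : Equiv.Perm (Fin p ⊕ Fin q)) :
    LinearMap.mul' K _ (AlternatingMap.domCoprod.summand φ ψ (Quotient.mk'' σ)
        (fun x => v (finSumFinEquiv x))) = wedgeTerm φ ψ σ v := by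
  rw [AlternatingMap.domCoprod.summand_mk'']
  simp only [smul_apply, MultilinearMap.domDomCongr_apply,
    MultilinearMap.domCoprod_apply, AlternatingMap.coe_multilinearMap, wedgeTerm]
  rw [LinearMap.map_smul_of_tower, LinearMap.mul'_apply]

lemma altWedge_mem (J : Ideal (MvPolynomial (Fin ℓ) K))
    (v : Fin (p + q) → MvPolynomial (Fin ℓ) K) (h : ∀ σ, wedgeTerm φ ψ σ v ∈ J) :
    altWedge φ ψ v ∈ J := by
  rw [altWedge_apply]
  refine J.sum_mem fun σ _ => ?_
  induction σ using Quotient.inductionOn' with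
  | h σ => rw [summand_mk]; exact h σ

/-- A slot of `φ ∧ ψ` is, in the term of `σ`, either a slot of `φ` or a slot of `ψ`. -/
lemma perm_slot (σ : Equiv.Perm (Fin p ⊕ Fin q)) (t : Fin (p + q)) :
    (∃ i, finSumFinEquiv (σ (Sum.inl i)) = t) ∨ (∃ j, finSumFinEquiv (σ (Sum.inr j)) = t) := by
  rcases h : σ.symm (finSumFinEquiv.symm t) with i | j
  · exact Or.inl ⟨i, by rw [← h]; simp⟩
  · exact Or.inr ⟨j, by rw [← h]; simp⟩

variable {φ ψ}

lemma wedgeTerm_update_mul (hφ : IsMultiDerAlong (AlgHom.id K _) φ)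
    (hψ : IsMultiDerAlong (AlgHom.id K _) ψ) (σ : Equiv.Perm (Fin p ⊕ Fin q))
    (t : Fin (p + q)) (v : Fin (p + q) → MvPolynomial (Fin ℓ) K)
    (f g : MvPolynomial (Fin ℓ) K) :
    wedgeTerm φ ψ σ (Function.update v t (f * g)) =
      f * wedgeTerm φ ψ σ (Function.update v t g) +
        g * wedgeTerm φ ψ σ (Function.update v t f) := by
  simp only [wedgeTerm]
  rcases perm_slot σ t with ⟨i, hi⟩ | ⟨i, hi⟩
  · have h1 : ∀ x, (fun i => Function.update v t x (finSumFinEquiv (σ (Sum.inl i)))) =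
        Function.update (fun i => v (finSumFinEquiv (σ (Sum.inl i)))) i x := by
      intro x; ext1 i'
      rcases eq_or_ne i' i with rfl | h
      · simp [hi]
      · rw [Function.update_of_ne h, Function.update_of_ne]
        rw [← hi]; simpa using h
    have h2 : ∀ x, (fun j => Function.update v t x (finSumFinEquiv (σ (Sum.inr j)))) =
        (fun j => v (finSumFinEquiv (σ (Sum.inr j)))) := by
      intro x; ext1 j
      rw [Function.update_of_ne]
      rw [← hi]; simp
    simp only [h1, h2, hφ i _ f g, AlgHom.id_apply, Units.smul_def, zsmul_eq_mul]
    ring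
  · have h1 : ∀ x, (fun i => Function.update v t x (finSumFinEquiv (σ (Sum.inr i)))) =
        Function.update (fun i => v (finSumFinEquiv (σ (Sum.inr i)))) i x := by
      intro x; ext1 i'
      rcases eq_or_ne i' i with rfl | h
      · simp [hi]
      · rw [Function.update_of_ne h, Function.update_of_ne]
        rw [← hi]; simpa using h
    have h2 : ∀ x, (fun j => Function.update v t x (finSumFinEquiv (σ (Sum.inl j)))) =
        (fun j => v (finSumFinEquiv (σ (Sum.inl j)))) := by
      intro x; ext1 j
      rw [Function.update_of_ne]
      rw [← hi]; simp
    simp only [h1, h2, hψ i _ f g, AlgHom.id_apply, Units.smul_def, zsmul_eq_mul]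
    ring

lemma altWedge_isMultiDer (hφ : IsMultiDerAlong (AlgHom.id K _) φ)
    (hψ : IsMultiDerAlong (AlgHom.id K _) ψ) : IsMultiDer (altWedge φ ψ) := by
  intro t v f g
  simp only [altWedge_apply, Finset.mul_sum, ← Finset.sum_add_distrib]
  refine Finset.sum_congr rfl fun σ _ => ?_
  induction σ using Quotient.inductionOn' with
  | h σ => simp only [summand_mk]; exact wedgeTerm_update_mul hφ hψ σ t v f g

end Wedge

/-- The ideal condition passes from `θ` to its extension. It suffices to let the slots other than
`i` be filled with indeterminates: either all of these come from the smaller ring and the value is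
the image of a value of `θ`, or the value is zero. -/
lemma extendDer_mem_span {n p : ℕ} {ι : Fin ℓ → Fin n} (hι : StrictMono ι)
    {θ : (MvPolynomial (Fin ℓ) K) [⋀^Fin p]→ₗ[K] (MvPolynomial (Fin ℓ) K)}
    (hθ : IsMultiDer θ) (α : MvPolynomial (Fin ℓ) K) (m : ℕ)
    (h : ∀ (v : Fin p → MvPolynomial (Fin ℓ) K) (i : Fin p), v i = α → θ v ∈ Ideal.span {α ^ m})
    (v : Fin p → MvPolynomial (Fin n) K) (i : Fin p) (hv : v i = rename ι α) :
    extendDer ι θ v ∈ Ideal.span {rename ι α ^ m} := by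
  refine (extendDer_isMultiDer ι θ).mem_of_forall_X _ {i} v (fun w h1 h2 => ?_) v
    (fun _ _ => rfl)
  have hwi : w i = rename ι α := by rw [h1 i rfl, hv]
  by_cases hr : ∀ t, ∃ a, w t = rename ι a
  · choose a ha using hr
    obtain rfl : w = fun t => rename ι (a t) := funext ha
    rw [extendDer_rename θ hθ hι, ← map_pow]
    have := h a i (rename_injective ι hι.injective hwi)
    rw [Ideal.mem_span_singleton] at this ⊢
    exact map_dvd _ this
  · push Not at hr
    obtain ⟨t, ht⟩ := hr
    have hti : t ∉ ({i} : Set (Fin p)) := by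
      rintro rfl; exact ht α hwi
    obtain ⟨x, hx⟩ := h2 t hti
    rw [extendDer_eq_zero θ w t]
    · exact zero_mem _
    · intro s
      rw [hx]
      refine pderiv_X_of_ne ?_
      rintro rfl
      exact ht (X s) (by rw [hx, rename_X])

section WedgeExtend

variable {p q : ℕ}
  {θ : (MvPolynomial (Fin ℓ₁) K) [⋀^Fin p]→ₗ[K] (MvPolynomial (Fin ℓ₁) K)}
  {η : (MvPolynomial (Fin ℓ₂) K) [⋀^Fin q]→ₗ[K] (MvPolynomial (Fin ℓ₂) K)}

lemma extendDer_castAdd_eq_zero (v : Fin p → MvPolynomial (Fin (ℓ₁ + ℓ₂)) K) (t : Fin p)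
    (f : MvPolynomial (Fin ℓ₂) K) (h : v t = rename (Fin.natAdd ℓ₁) f) :
    extendDer (Fin.castAdd ℓ₂) θ v = 0 := by
  refine extendDer_eq_zero θ v t fun i => ?_
  rw [h]
  exact pderiv_rename_of_notMem _ _ (fun j => (castAdd_ne_natAdd i j).symm) _

lemma extendDer_natAdd_eq_zero (v : Fin q → MvPolynomial (Fin (ℓ₁ + ℓ₂)) K) (t : Fin q)
    (f : MvPolynomial (Fin ℓ₁) K) (h : v t = rename (Fin.castAdd ℓ₂) f) :
    extendDer (Fin.natAdd ℓ₁) η v = 0 := by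
  refine extendDer_eq_zero η v t fun i => ?_
  rw [h]
  exact pderiv_rename_of_notMem _ _ (fun j => castAdd_ne_natAdd j i) _

/-- On arguments from `S₁` followed by arguments from `S₂`, only the identity shuffle
contributes to the wedge product. -/
lemma altWedge_extendDer_append (hθ : IsMultiDer θ) (hη : IsMultiDer η)
    (a : Fin p → MvPolynomial (Fin ℓ₁) K) (b : Fin q → MvPolynomial (Fin ℓ₂) K) :
    altWedge (extendDer (Fin.castAdd ℓ₂) θ) (extendDer (Fin.natAdd ℓ₁) η)
      (Fin.append (fun i => rename (Fin.castAdd ℓ₂) (a i))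
        (fun j => rename (Fin.natAdd ℓ₁) (b j))) =
      rename (Fin.castAdd ℓ₂) (θ a) * rename (Fin.natAdd ℓ₁) (η b) := by
  rw [altWedge_apply]
  refine (Finset.sum_eq_single
    (Quotient.mk'' 1 : Equiv.Perm.ModSumCongr (Fin p) (Fin q)) ?_ ?_).trans ?_
  · intro σ _ hσ
    induction σ using Quotient.inductionOn' with
    | h σ =>
      rw [summand_mk, wedgeTerm]
      by_cases hr : ∃ i j, σ (Sum.inl i) = Sum.inr j
      · obtain ⟨i, j, hij⟩ := hr
        rw [extendDer_castAdd_eq_zero _ i (b j), zero_mul, smul_zero]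
        rw [hij, finSumFinEquiv_apply_right, Fin.append_right]
      · refine absurd ?_ hσ
        have := Equiv.Perm.mem_sumCongrHom_range_of_perm_mapsTo_inl (σ := σ) (by
          rintro _ ⟨i, rfl⟩
          rcases h : σ (Sum.inl i) with i' | j
          · exact ⟨i', rfl⟩
          · exact absurd ⟨i, j, h⟩ hr)
        refine Quotient.sound' ?_
        rw [QuotientGroup.leftRel_apply]
        simpa using this
  · simp
  · rw [summand_mk]
    simp only [wedgeTerm, Equiv.Perm.sign_one, one_smul, Equiv.Perm.coe_one, id_eq,
      finSumFinEquiv_apply_left, finSumFinEquiv_apply_right, Fin.append_left, Fin.append_right]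
    rw [extendDer_rename θ hθ (Fin.strictMono_castAdd ℓ₂),
      extendDer_rename η hη (Fin.strictMono_natAdd ℓ₁)]

/-- The wedge product vanishes on tuples of indeterminates with the wrong number of indeterminates
from `S₁`. -/
lemma altWedge_extendDer_X_eq_zero (x : Fin (p + q) → Fin (ℓ₁ + ℓ₂))
    (hx : (Finset.univ.filter fun t => (x t : ℕ) < ℓ₁).card ≠ p) :
    altWedge (extendDer (Fin.castAdd ℓ₂) θ) (extendDer (Fin.natAdd ℓ₁) η)
      (fun t => X (x t)) = 0 := by
  rw [← Ideal.mem_bot]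
  refine altWedge_mem _ _ _ _ fun σ => ?_
  rw [Ideal.mem_bot, wedgeTerm]
  by_cases h1 : ∀ i, (x (finSumFinEquiv (σ (Sum.inl i))) : ℕ) < ℓ₁
  · by_cases h2 : ∀ j, ¬ (x (finSumFinEquiv (σ (Sum.inr j))) : ℕ) < ℓ₁
    · refine absurd ?_ hx
      have : (Finset.univ.filter fun t => (x t : ℕ) < ℓ₁) =
          (Finset.univ : Finset (Fin p)).map
            (Function.Embedding.inl.trans (σ.trans finSumFinEquiv).toEmbedding) := by
        ext t
        simp only [Finset.mem_filter, Finset.mem_univ, true_and, Finset.mem_map]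
        constructor
        · intro ht
          rcases perm_slot σ t with ⟨i, rfl⟩ | ⟨j, rfl⟩
          · exact ⟨i, rfl⟩
          · exact absurd ht (h2 j)
        · rintro ⟨i, rfl⟩
          exact h1 i
      rw [this]; simp
    · push Not at h2
      obtain ⟨j, hj⟩ := h2
      rw [extendDer_natAdd_eq_zero _ j (X ⟨_, hj⟩), mul_zero, smul_zero]
      rw [rename_X]; rfl
  · push Not at h1
    obtain ⟨i, hi⟩ := h1
    rw [extendDer_castAdd_eq_zero _ i
      (X ⟨(x (finSumFinEquiv (σ (Sum.inl i))) : ℕ) - ℓ₁, by omega⟩), zero_mul, smul_zero]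
    rw [rename_X]
    congr 1
    ext; simp; omega

end WedgeExtend

/-! ### Coefficients with respect to one group of indeterminates -/

/-- `S` viewed as the polynomial ring over `S₁` in the second group of indeterminates. -/
def toPoly₁ : MvPolynomial (Fin (ℓ₁ + ℓ₂)) K →ₐ[K]
    MvPolynomial (Fin ℓ₂) (MvPolynomial (Fin ℓ₁) K) :=
  aeval (Fin.addCases (fun i => C (X i)) (fun j => X j))

/-- `S` viewed as the polynomial ring over `S₂` in the first group of indeterminates. -/
def toPoly₂ : MvPolynomial (Fin (ℓ₁ + ℓ₂)) K →ₐ[K]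
    MvPolynomial (Fin ℓ₁) (MvPolynomial (Fin ℓ₂) K) :=
  aeval (Fin.addCases (fun i => X i) (fun j => C (X j)))

/-- The `S₁`-coefficient of the monomial of exponent `β` in the second group of
indeterminates. -/
def coeff₁ (β : Fin ℓ₂ →₀ ℕ) : MvPolynomial (Fin (ℓ₁ + ℓ₂)) K →ₗ[K] MvPolynomial (Fin ℓ₁) K :=
  ((lcoeff (MvPolynomial (Fin ℓ₁) K) β).restrictScalars K).comp
    (toPoly₁ (K := K) (ℓ₁ := ℓ₁) (ℓ₂ := ℓ₂)).toLinearMap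

/-- The `S₂`-coefficient of the monomial of exponent `α` in the first group of
indeterminates. -/
def coeff₂ (α : Fin ℓ₁ →₀ ℕ) : MvPolynomial (Fin (ℓ₁ + ℓ₂)) K →ₗ[K] MvPolynomial (Fin ℓ₂) K :=
  ((lcoeff (MvPolynomial (Fin ℓ₂) K) α).restrictScalars K).comp
    (toPoly₂ (K := K) (ℓ₁ := ℓ₁) (ℓ₂ := ℓ₂)).toLinearMap

lemma coeff₁_apply (β : Fin ℓ₂ →₀ ℕ) (f : MvPolynomial (Fin (ℓ₁ + ℓ₂)) K) :
    coeff₁ β f = coeff β (toPoly₁ f) := rfl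

lemma coeff₂_apply (α : Fin ℓ₁ →₀ ℕ) (f : MvPolynomial (Fin (ℓ₁ + ℓ₂)) K) :
    coeff₂ α f = coeff α (toPoly₂ f) := rfl

lemma toPoly₁_castAdd (a : MvPolynomial (Fin ℓ₁) K) :
    toPoly₁ (rename (Fin.castAdd ℓ₂) a) = C a := by
  induction a using MvPolynomial.induction_on with
  | C c => simp [toPoly₁, IsScalarTower.algebraMap_apply K (MvPolynomial (Fin ℓ₁) K)]
  | add f g hf hg => simp only [map_add, hf, hg]
  | mul_X f i hf => simp only [map_mul, hf]; simp [toPoly₁]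

lemma toPoly₁_natAdd (b : MvPolynomial (Fin ℓ₂) K) :
    toPoly₁ (rename (Fin.natAdd ℓ₁) b) = map C b := by
  induction b using MvPolynomial.induction_on with
  | C c => simp [toPoly₁, IsScalarTower.algebraMap_apply K (MvPolynomial (Fin ℓ₁) K)]
  | add f g hf hg => simp only [map_add, hf, hg]
  | mul_X f i hf => simp only [map_mul, hf]; simp [toPoly₁]

lemma toPoly₂_castAdd (a : MvPolynomial (Fin ℓ₁) K) :
    toPoly₂ (rename (Fin.castAdd ℓ₂) a) = map C a := by
  induction a using MvPolynomial.induction_on with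
  | C c => simp [toPoly₂, IsScalarTower.algebraMap_apply K (MvPolynomial (Fin ℓ₂) K)]
  | add f g hf hg => simp only [map_add, hf, hg]
  | mul_X f i hf => simp only [map_mul, hf]; simp [toPoly₂]

lemma toPoly₂_natAdd (b : MvPolynomial (Fin ℓ₂) K) :
    toPoly₂ (rename (Fin.natAdd ℓ₁) b) = C b := by
  induction b using MvPolynomial.induction_on with
  | C c => simp [toPoly₂, IsScalarTower.algebraMap_apply K (MvPolynomial (Fin ℓ₂) K)]
  | add f g hf hg => simp only [map_add, hf, hg]
  | mul_X f i hf => simp only [map_mul, hf]; simp [toPoly₂]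

lemma coeff₁_mul (β : Fin ℓ₂ →₀ ℕ) (a : MvPolynomial (Fin ℓ₁) K)
    (f : MvPolynomial (Fin (ℓ₁ + ℓ₂)) K) :
    coeff₁ β (rename (Fin.castAdd ℓ₂) a * f) = a * coeff₁ β f := by
  rw [coeff₁_apply, map_mul, toPoly₁_castAdd, coeff_C_mul, coeff₁_apply]

lemma coeff₂_mul (α : Fin ℓ₁ →₀ ℕ) (b : MvPolynomial (Fin ℓ₂) K)
    (f : MvPolynomial (Fin (ℓ₁ + ℓ₂)) K) :
    coeff₂ α (rename (Fin.natAdd ℓ₁) b * f) = b * coeff₂ α f := by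
  rw [coeff₂_apply, map_mul, toPoly₂_natAdd, coeff_C_mul, coeff₂_apply]

lemma coeff₂_mul_rename (α : Fin ℓ₁ →₀ ℕ) (a : MvPolynomial (Fin ℓ₁) K)
    (b : MvPolynomial (Fin ℓ₂) K) :
    coeff₂ α (rename (Fin.castAdd ℓ₂) a * rename (Fin.natAdd ℓ₁) b) = coeff α a • b := by
  rw [mul_comm, coeff₂_mul, coeff₂_apply, toPoly₂_castAdd, coeff_map, smul_eq_C_mul, mul_comm]

/-- Both double coefficients are the coefficient of `X^α Y^β`. -/
lemma coeff_coeff₁ (α : Fin ℓ₁ →₀ ℕ) (β : Fin ℓ₂ →₀ ℕ) (f : MvPolynomial (Fin (ℓ₁ + ℓ₂)) K) :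
    coeff α (coeff₁ β f) = coeff β (coeff₂ α f) := by
  suffices H : (lcoeff K α).comp (coeff₁ β) = (lcoeff K β).comp (coeff₂ α) from
    LinearMap.congr_fun H f
  refine linear_ext_mul fun a b => ?_
  simp only [LinearMap.comp_apply, lcoeff_apply]
  rw [coeff₂_mul_rename, coeff₁_mul, coeff₁_apply, toPoly₁_natAdd, coeff_map, coeff_smul,
    mul_comm, coeff_C_mul, smul_eq_mul, mul_comm]

/-- An element of `S` is determined by its `S₂`-coefficients, since `toPoly₂` has a left
inverse. -/
lemma ext_coeff₂ {f g : MvPolynomial (Fin (ℓ₁ + ℓ₂)) K} (h : ∀ α, coeff₂ α f = coeff₂ α g) :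
    f = g := by
  have hinv : ∀ f : MvPolynomial (Fin (ℓ₁ + ℓ₂)) K,
      eval₂Hom (rename (Fin.natAdd ℓ₁) : _ →ₐ[K] MvPolynomial (Fin (ℓ₁ + ℓ₂)) K).toRingHom
        (fun i => X (Fin.castAdd ℓ₂ i)) (toPoly₂ f) = f := by
    intro f
    induction f using MvPolynomial.induction_on with
    | C c => simp [toPoly₂, IsScalarTower.algebraMap_apply K (MvPolynomial (Fin ℓ₂) K)
        (MvPolynomial (Fin ℓ₁) _)]
    | add f g hf hg => simp only [map_add, hf, hg]
    | mul_X f i hf =>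
      rw [map_mul, map_mul, hf]
      congr 1
      refine Fin.addCases (fun i => ?_) (fun j => ?_) i <;> simp [toPoly₂]
  have h2 : toPoly₂ f = toPoly₂ g := MvPolynomial.ext _ _ h
  rw [← hinv f, h2, hinv g]

lemma formPoly_castAdd (φ : Module.Dual K (Fin ℓ₁ → K)) :
    formPoly (φ ∘ₗ LinearMap.funLeft K K (Fin.castAdd ℓ₂)) =
      rename (Fin.castAdd ℓ₂) (formPoly φ) := by
  have h1 : ∀ i, LinearMap.funLeft K K (Fin.castAdd ℓ₂) (Pi.single (Fin.castAdd ℓ₂ i) 1) =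
      (Pi.single i 1 : Fin ℓ₁ → K) := by
    intro i; ext j
    simp [LinearMap.funLeft_apply, Pi.single_apply]
  have h2 : ∀ i, LinearMap.funLeft K K (Fin.castAdd ℓ₂) (Pi.single (Fin.natAdd ℓ₁ i) 1) =
      (0 : Fin ℓ₁ → K) := by
    intro i; ext j
    simp [LinearMap.funLeft_apply, castAdd_ne_natAdd]
  simp only [formPoly, Fin.sum_univ_add, LinearMap.comp_apply, h1, h2]
  simp

lemma formPoly_natAdd (φ : Module.Dual K (Fin ℓ₂ → K)) :
    formPoly (φ ∘ₗ LinearMap.funLeft K K (Fin.natAdd ℓ₁)) =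
      rename (Fin.natAdd ℓ₁) (formPoly φ) := by
  have h1 : ∀ i, LinearMap.funLeft K K (Fin.natAdd ℓ₁) (Pi.single (Fin.natAdd ℓ₁ i) 1) =
      (Pi.single i 1 : Fin ℓ₂ → K) := by
    intro i; ext j
    simp [LinearMap.funLeft_apply, Pi.single_apply]
  have h2 : ∀ i, LinearMap.funLeft K K (Fin.natAdd ℓ₁) (Pi.single (Fin.castAdd ℓ₂ i) 1) =
      (0 : Fin ℓ₂ → K) := by
    intro i; ext j
    simp [LinearMap.funLeft_apply, (castAdd_ne_natAdd _ _).symm]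
  simp only [formPoly, Fin.sum_univ_add, LinearMap.comp_apply, h1, h2]
  simp

/-! ### Slices of a multi-derivation of the product -/

/-- A tuple of elements of `S₁` followed by a tuple of elements of `S₂`. -/
def splitTuple {p q : ℕ} (a : Fin p → MvPolynomial (Fin ℓ₁) K)
    (b : Fin q → MvPolynomial (Fin ℓ₂) K) : Fin (p + q) → MvPolynomial (Fin (ℓ₁ + ℓ₂)) K :=
  Fin.append (fun i => rename (Fin.castAdd ℓ₂) (a i)) (fun j => rename (Fin.natAdd ℓ₁) (b j))

section Slices

variable {p q : ℕ}

lemma splitTuple_update_left (a : Fin p → MvPolynomial (Fin ℓ₁) K)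
    (b : Fin q → MvPolynomial (Fin ℓ₂) K) (i : Fin p) (x : MvPolynomial (Fin ℓ₁) K) :
    splitTuple (Function.update a i x) b =
      Function.update (splitTuple a b) (Fin.castAdd q i) (rename (Fin.castAdd ℓ₂) x) := by
  ext1 t
  refine Fin.addCases (fun t => ?_) (fun t => ?_) t
  · rcases eq_or_ne t i with rfl | h
    · simp [splitTuple]
    · rw [Function.update_of_ne (by simpa using h)]; simp [splitTuple, h]
  · rw [Function.update_of_ne (castAdd_ne_natAdd _ _).symm]; simp [splitTuple]

lemma splitTuple_update_right (a : Fin p → MvPolynomial (Fin ℓ₁) K)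
    (b : Fin q → MvPolynomial (Fin ℓ₂) K) (i : Fin q) (x : MvPolynomial (Fin ℓ₂) K) :
    splitTuple a (Function.update b i x) =
      Function.update (splitTuple a b) (Fin.natAdd p i) (rename (Fin.natAdd ℓ₁) x) := by
  ext1 t
  refine Fin.addCases (fun t => ?_) (fun t => ?_) t
  · rw [Function.update_of_ne (castAdd_ne_natAdd _ _)]; simp [splitTuple]
  · rcases eq_or_ne t i with rfl | h
    · simp [splitTuple]
    · rw [Function.update_of_ne (by simpa using h)]; simp [splitTuple, h]

variable (θ : (MvPolynomial (Fin (ℓ₁ + ℓ₂)) K) [⋀^Fin (p + q)]→ₗ[K]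
    (MvPolynomial (Fin (ℓ₁ + ℓ₂)) K))

/-- The coefficient of `Y^β` in `θ(-, …, -, b)`, as an alternating map on `S₁`. -/
def slice₁ (β : Fin ℓ₂ →₀ ℕ) (b : Fin q → MvPolynomial (Fin ℓ₂) K) :
    (MvPolynomial (Fin ℓ₁) K) [⋀^Fin p]→ₗ[K] (MvPolynomial (Fin ℓ₁) K) where
  toFun a := coeff₁ β (θ (splitTuple a b))
  map_update_add' := by
    intro _ v i x y
    obtain rfl := Subsingleton.elim ‹DecidableEq (Fin p)› (instDecidableEqFin p)
    simp only [splitTuple_update_left, map_add, AlternatingMap.map_update_add]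
  map_update_smul' := by
    intro _ v i c x
    obtain rfl := Subsingleton.elim ‹DecidableEq (Fin p)› (instDecidableEqFin p)
    simp only [splitTuple_update_left, map_smul, AlternatingMap.map_update_smul]
  map_eq_zero_of_eq' := by
    intro v i j h hij
    have : θ (splitTuple v b) = 0 :=
      θ.map_eq_zero_of_eq (i := Fin.castAdd q i) (j := Fin.castAdd q j) _
        (by simp [splitTuple, h]) (by simpa using hij)
    change coeff₁ β (θ (splitTuple v b)) = 0
    rw [this, map_zero]

/-- The coefficient of `X^α` in `θ(a, -, …, -)`, as an alternating map on `S₂`. -/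
def slice₂ (α : Fin ℓ₁ →₀ ℕ) (a : Fin p → MvPolynomial (Fin ℓ₁) K) :
    (MvPolynomial (Fin ℓ₂) K) [⋀^Fin q]→ₗ[K] (MvPolynomial (Fin ℓ₂) K) where
  toFun b := coeff₂ α (θ (splitTuple a b))
  map_update_add' := by
    intro _ v i x y
    obtain rfl := Subsingleton.elim ‹DecidableEq (Fin q)› (instDecidableEqFin q)
    simp only [splitTuple_update_right, map_add, AlternatingMap.map_update_add]
  map_update_smul' := by
    intro _ v i c x
    obtain rfl := Subsingleton.elim ‹DecidableEq (Fin q)› (instDecidableEqFin q)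
    simp only [splitTuple_update_right, map_smul, AlternatingMap.map_update_smul]
  map_eq_zero_of_eq' := by
    intro v i j h hij
    have : θ (splitTuple a v) = 0 :=
      θ.map_eq_zero_of_eq (i := Fin.natAdd p i) (j := Fin.natAdd p j) _
        (by simp [splitTuple, h]) (by simpa using hij)
    change coeff₂ α (θ (splitTuple a v)) = 0
    rw [this, map_zero]

lemma slice₁_apply (β : Fin ℓ₂ →₀ ℕ) (b : Fin q → MvPolynomial (Fin ℓ₂) K)
    (a : Fin p → MvPolynomial (Fin ℓ₁) K) :
    slice₁ θ β b a = coeff₁ β (θ (splitTuple a b)) := rfl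

lemma slice₂_apply (α : Fin ℓ₁ →₀ ℕ) (b : Fin q → MvPolynomial (Fin ℓ₂) K)
    (a : Fin p → MvPolynomial (Fin ℓ₁) K) :
    slice₂ θ α a b = coeff₂ α (θ (splitTuple a b)) := rfl

variable {θ}

/-- Freezing arguments from `S₂` and taking a coefficient in `Y` is `S₁`-linear, so it preserves
the derivation property and divisibility by elements of `S₁`. -/
lemma slice₁_mem {A₁ : MultiArr K ℓ₁} {B : MultiArr K (ℓ₁ + ℓ₂)}
    (hd : ∀ φ ∈ A₁.duals, φ ∘ₗ LinearMap.funLeft K K (Fin.castAdd ℓ₂) ∈ B.duals)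
    (hm : ∀ φ ∈ A₁.duals, B.mult (φ ∘ₗ LinearMap.funLeft K K (Fin.castAdd ℓ₂)) = A₁.mult φ)
    (hθ : θ ∈ Dp B (p + q)) (β : Fin ℓ₂ →₀ ℕ) (b : Fin q → MvPolynomial (Fin ℓ₂) K) :
    slice₁ θ β b ∈ Dp A₁ p := by
  refine ⟨fun i v f g => ?_, fun φ hφ v i hv => ?_⟩
  · simp only [slice₁_apply, splitTuple_update_left, map_mul]
    rw [hθ.1, map_add, coeff₁_mul, coeff₁_mul]
  · have h := hθ.2 _ (hd φ hφ) (splitTuple v b) (Fin.castAdd q i)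
      (by rw [formPoly_castAdd, ← hv]; simp [splitTuple])
    rw [hm φ hφ, formPoly_castAdd, Ideal.mem_span_singleton, ← map_pow] at h
    obtain ⟨c, hc⟩ := h
    rw [slice₁_apply, hc, coeff₁_mul]
    exact Ideal.mul_mem_right _ _ (Ideal.mem_span_singleton_self _)

lemma slice₂_mem {A₂ : MultiArr K ℓ₂} {B : MultiArr K (ℓ₁ + ℓ₂)}
    (hd : ∀ φ ∈ A₂.duals, φ ∘ₗ LinearMap.funLeft K K (Fin.natAdd ℓ₁) ∈ B.duals)
    (hm : ∀ φ ∈ A₂.duals, B.mult (φ ∘ₗ LinearMap.funLeft K K (Fin.natAdd ℓ₁)) = A₂.mult φ)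
    (hθ : θ ∈ Dp B (p + q)) (α : Fin ℓ₁ →₀ ℕ) (a : Fin p → MvPolynomial (Fin ℓ₁) K) :
    slice₂ θ α a ∈ Dp A₂ q := by
  refine ⟨fun i v f g => ?_, fun φ hφ v i hv => ?_⟩
  · simp only [slice₂_apply, splitTuple_update_right, map_mul]
    rw [hθ.1, map_add, coeff₂_mul, coeff₂_mul]
  · have h := hθ.2 _ (hd φ hφ) (splitTuple a v) (Fin.natAdd p i)
      (by rw [formPoly_natAdd, ← hv]; simp [splitTuple])
    rw [hm φ hφ, formPoly_natAdd, Ideal.mem_span_singleton, ← map_pow] at h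
    obtain ⟨c, hc⟩ := h
    rw [slice₂_apply, hc, coeff₂_mul]
    exact Ideal.mul_mem_right _ _ (Ideal.mem_span_singleton_self _)

end Slices

/-! ### The product decomposition -/

/-- The multi-derivations which vanish on the tuples of indeterminates selected by `P`. -/
def vanishing {k : ℕ} (P : (Fin k → Fin ℓ) → Prop) :
    Submodule (MvPolynomial (Fin ℓ) K)
      ((MvPolynomial (Fin ℓ) K) [⋀^Fin k]→ₗ[K] (MvPolynomial (Fin ℓ) K)) where
  carrier := {θ | IsMultiDerAlong (AlgHom.id K _) θ ∧ ∀ x, P x → θ (fun t => X (x t)) = 0}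
  add_mem' := by
    rintro θ η ⟨h1, h2⟩ ⟨h3, h4⟩
    exact ⟨h1.add h3, fun x hx => by simp [h2 x hx, h4 x hx]⟩
  zero_mem' := ⟨IsMultiDerAlong.zero, fun x _ => by simp⟩
  smul_mem' := by
    rintro c θ ⟨h1, h2⟩
    exact ⟨h1.smul c, fun x hx => by simp [h2 x hx]⟩

lemma exists_linear_projection {V : Type*} [AddCommGroup V] [Module K V] (D : Submodule K V) :
    ∃ P : V →ₗ[K] D, ∀ d ∈ D, (P d : V) = d := by
  obtain ⟨P, hP⟩ := LinearMap.exists_leftInverse_of_injective D.subtype (Submodule.ker_subtype _)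
  exact ⟨P, fun d hd => congrArg Subtype.val (LinearMap.congr_fun hP ⟨d, hd⟩)⟩

section Product

variable {A₁ : MultiArr K ℓ₁} {A₂ : MultiArr K ℓ₂}

lemma wedge_mem_prodPiece {p q k : ℕ} (e : p + q = k)
    {θ : (MvPolynomial (Fin ℓ₁) K) [⋀^Fin p]→ₗ[K] (MvPolynomial (Fin ℓ₁) K)} (hθ : θ ∈ Dp A₁ p)
    {η : (MvPolynomial (Fin ℓ₂) K) [⋀^Fin q]→ₗ[K] (MvPolynomial (Fin ℓ₂) K)}
    (hη : η ∈ Dp A₂ q) :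
    (altWedge (extendDer (Fin.castAdd ℓ₂) θ) (extendDer (Fin.natAdd ℓ₁) η)).domDomCongr
      (finCongr e) ∈ prodPiece A₁ A₂ k p := by
  obtain rfl : q = k - p := by omega
  exact Submodule.subset_span ⟨e, _, _, ⟨θ, hθ, extendDer_isExt1 θ hθ.1⟩,
    ⟨η, hη, extendDer_isExt2 η hη.1⟩, rfl⟩

/-- Since extensions are unique, the generators of a piece may be taken to be the wedges of the
explicit extensions `extendDer`. -/
lemma prodPiece_le {p k : ℕ} (N : Submodule (MvPolynomial (Fin (ℓ₁ + ℓ₂)) K)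
      ((MvPolynomial (Fin (ℓ₁ + ℓ₂)) K) [⋀^Fin k]→ₗ[K] (MvPolynomial (Fin (ℓ₁ + ℓ₂)) K)))
    (h : ∀ (q : ℕ) (e : p + q = k), ∀ θ ∈ Dp A₁ p, ∀ η ∈ Dp A₂ q,
      (altWedge (extendDer (Fin.castAdd ℓ₂) θ) (extendDer (Fin.natAdd ℓ₁) η)).domDomCongr
        (finCongr e) ∈ N) : prodPiece A₁ A₂ k p ≤ N := by
  refine Submodule.span_le.2 ?_
  rintro _ ⟨e, θ', η', ⟨θ, hθ, hθ'⟩, ⟨η, hη, hη'⟩, rfl⟩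
  rw [hθ'.eq_extendDer hθ.1, hη'.eq_extendDer hη.1]
  exact h _ e θ hθ η hη

lemma domDomCongr_finCongr_rfl {M N : Type*} [AddCommGroup M] [Module K M] [AddCommGroup N]
    [Module K N] {k : ℕ} (F : M [⋀^Fin k]→ₗ[K] N) : F.domDomCongr (finCongr rfl) = F := by
  ext v; simp

lemma prodPiece_le_vanishing (k p : ℕ) : prodPiece A₁ A₂ k p ≤
    vanishing fun x => (Finset.univ.filter fun t => (x t : ℕ) < ℓ₁).card ≠ p := by
  refine prodPiece_le _ fun q e θ hθ η hη => ?_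
  subst e
  rw [domDomCongr_finCongr_rfl]
  exact ⟨altWedge_isMultiDer (extendDer_isMultiDer _ θ) (extendDer_isMultiDer _ η),
    fun x hx => altWedge_extendDer_X_eq_zero x hx⟩

/-- A multi-derivation is determined by its values on tuples of indeterminates. The `i`-th piece
vanishes on those which do not have exactly `i` entries from `S₁`, the others on those which do. -/
lemma prodPiece_indep (k : ℕ) : iSupIndep (prodPiece A₁ A₂ k) := by
  intro i
  rw [Submodule.disjoint_def]
  intro ξ h1 h2
  have h1 := prodPiece_le_vanishing k i h1
  have h2 : ξ ∈ vanishing (K := K) fun x : Fin k → Fin (ℓ₁ + ℓ₂) =>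
      (Finset.univ.filter fun t => (x t : ℕ) < ℓ₁).card = i := by
    refine (iSup₂_le fun j hj => ?_ : (⨆ j, ⨆ (_ : j ≠ i), prodPiece A₁ A₂ k j) ≤ _) h2
    exact (prodPiece_le_vanishing k j).trans
      fun θ hθ => ⟨hθ.1, fun x hx => hθ.2 x fun h => hj (h.symm.trans hx)⟩
  refine h1.1.ext IsMultiDerAlong.zero fun x _ => ?_
  by_cases hx : (Finset.univ.filter fun t => (x t : ℕ) < ℓ₁).card = i
  · simpa using h2.2 x hx
  · simpa using h1.2 x hx

variable {B : MultiArr K (ℓ₁ + ℓ₂)}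
  (hduals : ∀ ψ, ψ ∈ B.duals ↔
      (∃ φ ∈ A₁.duals, ψ = φ ∘ₗ LinearMap.funLeft K K (Fin.castAdd ℓ₂)) ∨
      (∃ φ ∈ A₂.duals, ψ = φ ∘ₗ LinearMap.funLeft K K (Fin.natAdd ℓ₁)))
  (hm₁ : ∀ φ ∈ A₁.duals, B.mult (φ ∘ₗ LinearMap.funLeft K K (Fin.castAdd ℓ₂)) = A₁.mult φ)
  (hm₂ : ∀ φ ∈ A₂.duals, B.mult (φ ∘ₗ LinearMap.funLeft K K (Fin.natAdd ℓ₁)) = A₂.mult φ)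

include hduals hm₁ hm₂

lemma prodPiece_le_Dp (k p : ℕ) : prodPiece A₁ A₂ k p ≤ Dp B k := by
  refine prodPiece_le _ fun q e θ hθ η hη => ?_
  subst e
  rw [domDomCongr_finCongr_rfl]
  refine ⟨altWedge_isMultiDer (extendDer_isMultiDer _ θ) (extendDer_isMultiDer _ η),
    fun ψ hψ v t hv => altWedge_mem _ _ _ _ fun σ => ?_⟩
  rw [wedgeTerm, Units.smul_def]
  refine zsmul_mem ?_ _
  rcases (hduals ψ).1 hψ with ⟨φ, hφ, rfl⟩ | ⟨φ, hφ, rfl⟩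
  · rw [hm₁ φ hφ, formPoly_castAdd]
    rw [formPoly_castAdd] at hv
    rcases perm_slot σ t with ⟨i, hi⟩ | ⟨j, hj⟩
    · exact Ideal.mul_mem_right _ _ (extendDer_mem_span (Fin.strictMono_castAdd ℓ₂) hθ.1 _ _
        (hθ.2 φ hφ) _ i (by rw [hi, hv]))
    · rw [extendDer_natAdd_eq_zero _ j (formPoly φ) (by rw [hj, hv]), mul_zero]
      exact zero_mem _
  · rw [hm₂ φ hφ, formPoly_natAdd]
    rw [formPoly_natAdd] at hv
    rcases perm_slot σ t with ⟨i, hi⟩ | ⟨j, hj⟩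
    · rw [extendDer_castAdd_eq_zero _ i (formPoly φ) (by rw [hi, hv]), zero_mul]
      exact zero_mem _
    · exact Ideal.mul_mem_left _ _ (extendDer_mem_span (Fin.strictMono_natAdd ℓ₁) hη.1 _ _
        (hη.2 φ hφ) _ j (by rw [hj, hv]))

/-- The component of bidegree `(p, q)` of a multi-derivation of the product lies in the
corresponding piece. Expanding in the second group of indeterminates writes the component as
`∑ c ∧ (Y^β ∂_w)` with coefficients `c ∈ D^p(𝒜₁)`; a `K`-linear projection onto `D^q(𝒜₂)`,
applied to the factors `Y^β ∂_w`, does not change this sum, because the slices of the component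
in the other direction already lie in `D^q(𝒜₂)`. -/
lemma exists_component {p q : ℕ}
    {θ : (MvPolynomial (Fin (ℓ₁ + ℓ₂)) K) [⋀^Fin (p + q)]→ₗ[K]
      (MvPolynomial (Fin (ℓ₁ + ℓ₂)) K)} (hθ : θ ∈ Dp B (p + q)) :
    ∃ ξ ∈ prodPiece A₁ A₂ (p + q) p, ∀ (u : Fin p → Fin ℓ₁) (w : Fin q → Fin ℓ₂),
      ξ (splitTuple (fun i => X (u i)) (fun j => X (w j))) =
        θ (splitTuple (fun i => X (u i)) (fun j => X (w j))) := by
  classical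
  have hd₁ : ∀ φ ∈ A₁.duals, φ ∘ₗ LinearMap.funLeft K K (Fin.castAdd ℓ₂) ∈ B.duals :=
    fun φ hφ => (hduals _).2 (Or.inl ⟨φ, hφ, rfl⟩)
  have hd₂ : ∀ φ ∈ A₂.duals, φ ∘ₗ LinearMap.funLeft K K (Fin.natAdd ℓ₁) ∈ B.duals :=
    fun φ hφ => (hduals _).2 (Or.inr ⟨φ, hφ, rfl⟩)
  have : IsScalarTower K (MvPolynomial (Fin ℓ₂) K)
      ((MvPolynomial (Fin ℓ₂) K) [⋀^Fin q]→ₗ[K] (MvPolynomial (Fin ℓ₂) K)) :=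
    ⟨fun a b F => by ext1 v; simp only [AlternatingMap.smul_apply, smul_assoc]⟩
  -- a `K`-linear projection is enough here, since the coefficients of the `Y^β ∂_w` below are
  -- moved into `S₁` first
  obtain ⟨P, hP⟩ := exists_linear_projection ((Dp A₂ q).restrictScalars K)
  let T : (Fin p → Fin ℓ₁) → (Fin q → Fin ℓ₂) → MvPolynomial (Fin (ℓ₁ + ℓ₂)) K := fun u w =>
    θ (splitTuple (fun i => X (u i)) (fun j => X (w j)))
  -- a finite set of exponents which contains all those that occur
  let E : Finset (Fin ℓ₂ →₀ ℕ) := Finset.univ.biUnion fun u : Fin p → Fin ℓ₁ =>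
    Finset.univ.biUnion fun w : Fin q → Fin ℓ₂ => (toPoly₁ (T u w)).support
  have hE : ∀ u w α, ∑ β ∈ E, monomial β (coeff β (coeff₂ α (T u w))) = coeff₂ α (T u w) := by
    intro u w α
    conv_rhs => rw [(coeff₂ α (T u w)).as_sum]
    refine (Finset.sum_subset (fun β hβ => ?_) fun β _ hβ => ?_).symm
    · simp only [E, Finset.mem_biUnion, Finset.mem_univ, true_and]
      refine ⟨u, w, ?_⟩
      rw [mem_support_iff] at hβ ⊢
      rw [← coeff_coeff₁, coeff₁_apply] at hβ
      intro h0
      rw [h0, coeff_zero] at hβ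
      exact hβ rfl
    · rw [notMem_support_iff.1 hβ, map_zero]
  let W : Finset (Fin q → Fin ℓ₂) := Finset.univ.filter fun w => StrictMono w
  let ξ : (MvPolynomial (Fin (ℓ₁ + ℓ₂)) K) [⋀^Fin (p + q)]→ₗ[K]
      (MvPolynomial (Fin (ℓ₁ + ℓ₂)) K) := ∑ w ∈ W, ∑ β ∈ E,
    altWedge (extendDer (Fin.castAdd ℓ₂) (slice₁ θ β fun j => X (w j)))
      (extendDer (Fin.natAdd ℓ₁) (P (monomial β (1 : K) • wedgePDeriv w)).1)
  have hs := fun β (b : Fin q → MvPolynomial (Fin ℓ₂) K) => slice₁_mem hd₁ hm₁ hθ β b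
  refine ⟨ξ, Submodule.sum_mem _ fun w _ => Submodule.sum_mem _ fun β _ => ?_, fun u w' => ?_⟩
  · have := wedge_mem_prodPiece (A₁ := A₁) (A₂ := A₂) (rfl : p + q = p + q)
      (hs β fun j => X (w j)) (P (monomial β (1 : K) • wedgePDeriv w)).2
    rwa [domDomCongr_finCongr_rfl] at this
  · refine ext_coeff₂ fun α => ?_
    -- the `X^α`-coefficient of `ξ` is a `K`-linear combination of the projected `Y^β ∂_w`
    have h1 : coeff₂ α (ξ (splitTuple (fun i => X (u i)) (fun j => X (w' j)))) =
        ∑ w ∈ W, ∑ β ∈ E, coeff β (coeff₂ α (T u w)) •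
          (P (monomial β (1 : K) • wedgePDeriv w)).1
            (fun j => X (w' j)) := by
      simp only [ξ, alternatingMap_sum_apply, map_sum]
      refine Finset.sum_congr rfl fun w _ => Finset.sum_congr rfl fun β _ => ?_
      rw [splitTuple, altWedge_extendDer_append (hs β _).1 (P _).2.1, coeff₂_mul_rename,
        slice₁_apply, coeff_coeff₁]
    -- the same combination without the projection is a slice of `θ`, hence lies in `D^q(𝒜₂)`
    have h2 : ∑ w ∈ W, ∑ β ∈ E, coeff β (coeff₂ α (T u w)) •
          ((monomial β (1 : K) : MvPolynomial (Fin ℓ₂) K) • wedgePDeriv (K := K) w) =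
        slice₂ θ α fun i => X (u i) := by
      have hmem := slice₂_mem hd₂ hm₂ hθ α (fun i => X (u i))
      rw [← extendDer_id _ hmem.1]
      ext1 v
      rw [extendDer_apply, alternatingMap_sum_apply]
      refine Finset.sum_congr rfl fun w _ => ?_
      rw [slice₂_apply, rename_id_apply]
      change _ = coeff₂ α (T u w) * _
      conv_rhs => rw [← hE u w α]
      rw [alternatingMap_sum_apply, Finset.sum_mul]
      refine Finset.sum_congr rfl fun β _ => ?_
      simp only [AlternatingMap.smul_apply, smul_eq_mul]
      rw [← smul_mul_assoc, smul_monomial, smul_eq_mul, mul_one]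
      rfl
    have h3 := congrArg (fun d => (P d).1 (fun j => X (w' j))) h2
    simp only [map_sum, map_smul, hP _ (slice₂_mem hd₂ hm₂ hθ α _)] at h3
    rw [h1, ← slice₂_apply, ← h3]
    simp only [Submodule.coe_sum, Submodule.coe_smul, alternatingMap_sum_apply,
      AlternatingMap.smul_apply]

/-- The component of a multi-derivation on the monotone tuples of indeterminates with exactly `p`
entries from `S₁`; monotonicity means that these entries fill the first `p` slots. -/
lemma exists_component' {k : ℕ} (p : ℕ)
    {θ : (MvPolynomial (Fin (ℓ₁ + ℓ₂)) K) [⋀^Fin k]→ₗ[K]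
      (MvPolynomial (Fin (ℓ₁ + ℓ₂)) K)} (hθ : θ ∈ Dp B k) :
    ∃ ξ ∈ prodPiece A₁ A₂ k p, ∀ x : Fin k → Fin (ℓ₁ + ℓ₂), Monotone x →
      (Finset.univ.filter fun t => (x t : ℕ) < ℓ₁).card = p →
      ξ (fun t => X (x t)) = θ (fun t => X (x t)) := by
  by_cases hpk : p ≤ k
  · obtain ⟨q, rfl⟩ := Nat.exists_eq_add_of_le hpk
    obtain ⟨ξ, h1, h2⟩ := exists_component hduals hm₁ hm₂ hθ
    refine ⟨ξ, h1, fun x hx hc => ?_⟩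
    have hlt : ∀ t : Fin (p + q), (t : ℕ) < p ↔ (x t : ℕ) < ℓ₁ := by
      intro t
      have hm : Monotone fun t => (x t : ℕ) := fun a b h => hx h
      have key := Tuple.lt_card_lt_iff_apply_lt_of_monotone (f := fun t => (x t : ℕ))
        (j := t) (a := ℓ₁) hm
      rwa [hc] at key
    have hr : ∀ j, ¬ (x (Fin.natAdd p j) : ℕ) < ℓ₁ := fun j h => by
      simpa using (hlt _).2 h
    have : (fun t => X (x t) : Fin (p + q) → MvPolynomial (Fin (ℓ₁ + ℓ₂)) K) = splitTuple
        (fun i => X ⟨x (Fin.castAdd q i), (hlt _).1 (by simp)⟩)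
        (fun j => X ⟨x (Fin.natAdd p j) - ℓ₁, by have := hr j; omega⟩) := by
      ext1 t
      refine Fin.addCases (fun i => ?_) (fun j => ?_) t
      · simp [splitTuple]
      · simp only [splitTuple, Fin.append_right, rename_X]
        congr 1
        ext
        have := hr j
        simp; omega
    rw [this]
    exact h2 _ _
  · refine ⟨0, zero_mem _, fun x _ hc => absurd ?_ hpk⟩
    rw [← hc]
    exact (Finset.card_le_univ _).trans (by simp)

lemma Dp_le_iSup (k : ℕ) : Dp B k ≤ ⨆ i : ℕ, prodPiece A₁ A₂ k i := by
  intro θ hθ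
  choose ξ h1 h2 using fun p => exists_component' hduals hm₁ hm₂ p hθ
  have hv := fun p => prodPiece_le_vanishing k p (h1 p)
  have : θ = ∑ p ∈ Finset.range (k + 1), ξ p := by
    refine IsMultiDerAlong.ext (ρ := AlgHom.id K _) hθ.1
      (IsMultiDerAlong.sum _ _ fun p _ => (hv p).1) fun x hx => ?_
    rw [alternatingMap_sum_apply,
      Finset.sum_eq_single (Finset.univ.filter fun t => (x t : ℕ) < ℓ₁).card]
    · exact (h2 _ x hx rfl).symm
    · exact fun p _ hp => (hv p).2 x hp.symm
    · intro h
      refine absurd (Finset.mem_range.2 (Nat.lt_succ_of_le ?_)) h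
      exact (Finset.card_le_univ _).trans (by simp)
  rw [this]
  exact Submodule.sum_mem _ fun p _ => Submodule.mem_iSup_of_mem p (h1 p)

end Product

/-- For the product multiarrangement `(𝒜₁,m₁) × (𝒜₂,m₂)` in
`V₁ ⊕ V₂ = K^{ℓ₁+ℓ₂}`, under the identification of `Der^k(S)` with
`⊕_{i+j=k} Der^i(S₁) ⊗_K Der^j(S₂)` one has
`D^k((𝒜₁,m₁) × (𝒜₂,m₂)) = ⊕_{i+j=k} D^i(𝒜₁,m₁) ⊗_K D^j(𝒜₂,m₂)`: it is the internal
direct sum of the images of the `D^i(𝒜₁,m₁) ⊗_K D^{k-i}(𝒜₂,m₂)`. -/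
theorem Dp_prod (A₁ : MultiArr K ℓ₁) (A₂ : MultiArr K ℓ₂) (B : MultiArr K (ℓ₁ + ℓ₂))
    (hduals : ∀ ψ, ψ ∈ B.duals ↔
      (∃ φ ∈ A₁.duals, ψ = φ ∘ₗ LinearMap.funLeft K K (Fin.castAdd ℓ₂)) ∨
      (∃ φ ∈ A₂.duals, ψ = φ ∘ₗ LinearMap.funLeft K K (Fin.natAdd ℓ₁)))
    (hm₁ : ∀ φ ∈ A₁.duals, B.mult (φ ∘ₗ LinearMap.funLeft K K (Fin.castAdd ℓ₂)) = A₁.mult φ)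
    (hm₂ : ∀ φ ∈ A₂.duals, B.mult (φ ∘ₗ LinearMap.funLeft K K (Fin.natAdd ℓ₁)) = A₂.mult φ)
    (k : ℕ) :
    Dp B k = (⨆ i : ℕ, prodPiece A₁ A₂ k i) ∧ iSupIndep (prodPiece A₁ A₂ k) := by
  exact ⟨le_antisymm (Dp_le_iSup hduals hm₁ hm₂ k)
    (iSup_le fun i => prodPiece_le_Dp hduals hm₁ hm₂ k i), prodPiece_indep k⟩
end
end

section
/- For any multiarrangement (A,m) in V = K^ℓ, the series ψ(A,m;t,q) = Σ_{p=0}^{ℓ} H(D^p(A,m),q)·(t(q−1)−1)^p, which a priori is a polynomial in t whose coefficients are rational functions of q, is a polynomial in q and t. -/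
/-!
Write `H_p` for the Hilbert series of `D^p(A,m)`, so that `ψ = ∑ H_p ((q-1)t - 1)^p`.

**Reduction.** By Hilbert–Serre, `(1-q)^ℓ H_p` is a polynomial, hence `(1-q)^ℓ ψ` lies in `ℤ[q][t]`.
Divide out the factors `1-q` one at a time: `1-q` divides `F ∈ ℤ[q][t]` as soon as `1-q` divides
`F(t_a)` for polynomials `t_a ∈ ℤ[q]` whose values at `q = 1` are infinitely many integers, because
the integer polynomial `F` mod `(q-1)` then has infinitely many roots. So it suffices that
`ψ(t_a, q)` is a polynomial for such a family (`exists_polynomial_of_evals`). Take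
`t_a = -(1 + q + ⋯ + q^(e-1))` with `e = (a+1)b`: then `(q-1)t_a - 1 = -q^e` and `t_a(1) = -e`.

**The complex.** At this value `ψ` is `∑ H_p (-q^e)^p`, the graded Euler characteristic of the complex
`D^ℓ → ⋯ → D^1 → D^0` whose differential is contraction with a 1-form `w = ∑ w_i dx_i`, the `w_i`
being homogeneous of degree `e` (for `w` a differential `df` this is the complex of Solomon and
Terao). It is a polynomial if the homology vanishes in all large degrees, i.e. if some power of the
irrelevant ideal annihilates it, i.e. if every prime `P` containing the annihilator contains all
`x_i`. If `u` is a constant vector in a subspace `X` and `q_X` is the product of the linear forms not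
vanishing on `X`, then `q_X^M (u ∧ -)` preserves `D` for `M` large and is a contracting homotopy for
multiplication by `q_X^M ⟨w,u⟩` (`contr_wdg_succ`, `wdg_mem`). So the annihilator contains all
`q_X^M ⟨w,u⟩`.

**The generic form.** `exists_generic_form` produces `w` of every degree divisible by a fixed `b > 0`
such that a prime containing `q_X^M ⟨w,u⟩` for all `X` and all `u ∈ X` contains every `x_i`. Explicitly
`w = ∑_Y c_{dim Y} q_Y^(e / deg q_Y)`, the sum running over the nonzero flats `Y`, where the covectors
`c_k` are chosen such that on each flat `X` of dimension `k` some vector is killed by `c_j` for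
`j < k` but not by `c_k`. Given a prime `P`, let `X` be the flat cut out by the linear forms
lying in `P`, and let `v ∈ X` be such a vector; then modulo `P` only the term of `Y = X` survives in
`⟨w,v⟩`, which is therefore not in `P` unless `X = 0`.

The choice of the covectors needs an infinite field; graded dimensions do not change under extension
of scalars (`finrank_UL_eq`), so `w` may have coefficients in the algebraic closure. Multiderivations
are handled through their values on linear forms, which determine them (`finrank_DpGraded`).
-/

open MvPolynomial

noncomputable section

variable {K : Type*} [Field K] {ℓ : ℕ}

attribute [local instance] Classical.propDecidable

/-- The subarrangement `(𝒜_X, m_X)`, consisting of the hyperplanes of `𝒜` containing `X`,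
with the restricted multiplicity. -/
def restrictArr (A : MultiArr K ℓ) (X : Submodule K (Fin ℓ → K)) : MultiArr K ℓ where
  duals := A.duals.filter (fun φ => X ≤ LinearMap.ker φ)
  ne_zero := fun φ hφ => A.ne_zero φ (Finset.mem_filter.mp hφ).1
  distinct_ker := fun φ hφ ψ hψ =>
    A.distinct_ker φ (Finset.mem_filter.mp hφ).1 ψ (Finset.mem_filter.mp hψ).1
  mult := A.mult
  mult_pos := fun φ hφ => A.mult_pos φ (Finset.mem_filter.mp hφ).1

/-- The intersection lattice `L(𝒜)`: all intersections of subsets of `𝒜`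
(with `V` itself as the empty intersection). -/
def LSet (A : MultiArr K ℓ) : Finset (Submodule K (Fin ℓ → K)) :=
  A.duals.powerset.image fun B => ⨅ φ ∈ B, LinearMap.ker φ

/-- The rank `r(X) = codim_V X` of a subspace `X ⊆ V = K^ℓ`. -/
def rk {K : Type*} [Field K] {ℓ : ℕ} (X : Submodule K (Fin ℓ → K)) : ℕ :=
  ℓ - Module.finrank K X

/-- A `p`-derivation is homogeneous of (polynomial) degree `d` if all the values
`θ(x_{i_1},…,x_{i_p})` are homogeneous polynomials of degree `d`. -/
def AltHomog {p : ℕ}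
    (θ : (MvPolynomial (Fin ℓ) K) [⋀^Fin p]→ₗ[K] (MvPolynomial (Fin ℓ) K)) (d : ℕ) : Prop :=
  ∀ v : Fin p → Fin ℓ, (θ fun j => MvPolynomial.X (v j)).IsHomogeneous d

/-- The degree-`d` graded component of `D^p(𝒜,m)`, as a `K`-subspace. -/
def DpGraded (A : MultiArr K ℓ) (p d : ℕ) :
    Submodule K ((MvPolynomial (Fin ℓ) K) [⋀^Fin p]→ₗ[K] (MvPolynomial (Fin ℓ) K)) where
  carrier := {θ | θ ∈ Dp A p ∧ AltHomog θ d}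
  add_mem' := fun ha hb =>
    ⟨add_mem ha.1 hb.1, fun v => by
      simpa using (ha.2 v).add (hb.2 v)⟩
  zero_mem' := ⟨zero_mem _, fun v => by
    simpa using MvPolynomial.isHomogeneous_zero _ _ d⟩
  smul_mem' := fun c θ hθ => by
    refine ⟨?_, fun v => ?_⟩
    · have : c • θ = (MvPolynomial.C c : MvPolynomial (Fin ℓ) K) • θ := by
        ext v
        simp [MvPolynomial.smul_eq_C_mul]
      rw [this]
      exact Submodule.smul_mem _ _ hθ.1
    · have : (c • θ) (fun j => MvPolynomial.X (v j)) =
        MvPolynomial.C c * θ (fun j => MvPolynomial.X (v j)) := by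
        simp [MvPolynomial.smul_eq_C_mul]
      rw [this]
      simpa using (MvPolynomial.isHomogeneous_C _ c).mul (hθ.2 v)

/-- The Hilbert series `H(D^p(𝒜,m), q) = Σ_d dim_K D^p(𝒜,m)_d qᵈ`. -/
def hilb (A : MultiArr K ℓ) (p : ℕ) : PowerSeries ℤ :=
  PowerSeries.mk fun d => (Module.finrank K (DpGraded A p d) : ℤ)

/-- `ψ(𝒜,m;t,q) = Σ_{p=0}^{ℓ} H(D^p(𝒜,m),q)·(t(q−1)−1)^p`, as a polynomial in `t` with
power-series (in `q`) coefficients. -/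
def psi (A : MultiArr K ℓ) : Polynomial (PowerSeries ℤ) :=
  ∑ p ∈ Finset.range (ℓ + 1), Polynomial.C (hilb A p) *
    (Polynomial.C ((PowerSeries.X : PowerSeries ℤ) - 1) * Polynomial.X - 1) ^ p

/-- The coefficient of `t^k` in `ψ(𝒜,m;t,q)`, expressed as a polynomial in `q`
(this is possible by Theorem `chithm`; junk value `0` otherwise). -/
def psiQCoeff (A : MultiArr K ℓ) (k : ℕ) : Polynomial ℤ :=
  if h : ∃ f : Polynomial ℤ, Polynomial.coeToPowerSeries.ringHom f = (psi A).coeff k then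
    h.choose else 0

/-- The coefficient of `t^k` in `ψ(𝒜,m;t,1)`. -/
def psiAtOne (A : MultiArr K ℓ) (k : ℕ) : ℤ := (psiQCoeff A k).eval 1

/-- `ψ(𝒜,m;t,1)` as a polynomial in `t`. -/
def psiT1Poly (A : MultiArr K ℓ) : Polynomial ℤ :=
  ∑ k ∈ Finset.range (ℓ + 1), Polynomial.C (psiAtOne A k) * Polynomial.X ^ k

/-- The characteristic polynomial `χ((𝒜,m),t) = (−1)^ℓ ψ(𝒜,m;t,1)`. -/
def charPoly (A : MultiArr K ℓ) : Polynomial ℤ := (-1 : ℤ) ^ ℓ • psiT1Poly A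

/-- `C_p`, the coefficient of `t^p` in the Poincaré polynomial
`π((𝒜,m),t) = (−t)^ℓ χ((𝒜,m),−t^{−1})`. -/
def CpCoeff (A : MultiArr K ℓ) (p : ℕ) : ℤ := (-1 : ℤ) ^ (ℓ - p) * psiAtOne A (ℓ - p)

/-- The Poincaré polynomial `π((𝒜,m),t) = (−t)^ℓ χ((𝒜,m),−t^{−1})`. -/
def poinPoly (A : MultiArr K ℓ) : Polynomial ℤ :=
  ∑ p ∈ Finset.range (ℓ + 1), Polynomial.C (CpCoeff A p) * Polynomial.X ^ p

/-! ### Polynomiality from infinitely many evaluations -/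

/-- A polynomial over `ℤ[q]` is divisible by `(1 - q)^n` if its values at the `t i` are, where the
`t i` have pairwise distinct values at `q = 1`. -/
lemma dvd_of_dvd_evals (n : ℕ) (t : ℕ → Polynomial ℤ)
    (ht : Function.Injective fun i => (t i).eval 1) (P : Polynomial (Polynomial ℤ))
    (h : ∀ i, (1 - Polynomial.X : Polynomial ℤ) ^ n ∣ P.eval (t i)) :
    Polynomial.C ((1 - Polynomial.X : Polynomial ℤ) ^ n) ∣ P := by
  induction n generalizing P with
  | zero => simp
  | succ n ih =>
    -- Setting `q = 1` gives an integer polynomial vanishing at the infinitely many `t i (1)`.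
    have h0 : P.map (Polynomial.evalRingHom (1 : ℤ)) = 0 := by
      refine Polynomial.eq_zero_of_infinite_isRoot _ (Set.Infinite.mono ?_ (Set.infinite_range_of_injective ht))
      rintro _ ⟨i, rfl⟩
      obtain ⟨c, hc⟩ := h i
      have := Polynomial.eval_map_apply (Polynomial.evalRingHom (1 : ℤ)) (p := P) (t i)
      simp only [Polynomial.coe_evalRingHom] at this
      simp [Polynomial.IsRoot, this, hc]
    have h1 : Polynomial.C (1 - Polynomial.X : Polynomial ℤ) ∣ P := by
      rw [Polynomial.C_dvd_iff_dvd_coeff]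
      intro k
      have : (P.coeff k).eval 1 = 0 := by
        have := congrArg (fun f => f.coeff k) h0
        simpa using this
      have := (Polynomial.dvd_iff_isRoot (a := (1 : ℤ)) (p := P.coeff k)).2 this
      rw [← neg_dvd]
      simpa using this
    obtain ⟨P', rfl⟩ := h1
    have hne : (1 - Polynomial.X : Polynomial ℤ) ≠ 0 := by
      intro h
      have := congrArg (fun f => f.coeff 0) h
      simp at this
    obtain ⟨P'', rfl⟩ := ih P' fun i => by
      have := h i
      rw [Polynomial.eval_mul, Polynomial.eval_C, pow_succ'] at this
      exact (mul_dvd_mul_iff_left hne).1 this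
    exact ⟨P'', by rw [pow_succ', Polynomial.C_mul, mul_assoc]⟩

/-- A polynomial in `t` over `ℤ[[q]]` with denominator `(1 - q)^n` has coefficients in `ℤ[q]` as soon
as its values at infinitely many sufficiently different `t i ∈ ℤ[q]` lie in `ℤ[q]`. -/
lemma exists_polynomial_of_evals (n : ℕ) (t : ℕ → Polynomial ℤ)
    (ht : Function.Injective fun i => (t i).eval 1) (F : Polynomial (PowerSeries ℤ))
    (h1 : ∃ P : Polynomial (Polynomial ℤ), P.map Polynomial.coeToPowerSeries.ringHom =
      Polynomial.C (Polynomial.coeToPowerSeries.ringHom ((1 - Polynomial.X : Polynomial ℤ) ^ n)) * F)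
    (h2 : ∀ i, ∃ f : Polynomial ℤ, Polynomial.coeToPowerSeries.ringHom f = F.eval (Polynomial.coeToPowerSeries.ringHom (t i))) :
    ∃ P : Polynomial (Polynomial ℤ), P.map Polynomial.coeToPowerSeries.ringHom = F := by
  have hinj : Function.Injective (Polynomial.coeToPowerSeries.ringHom : Polynomial ℤ →+* PowerSeries ℤ) :=
    Polynomial.coe_injective ℤ
  obtain ⟨P, hP⟩ := h1
  obtain ⟨P', rfl⟩ := dvd_of_dvd_evals n t ht P fun i => by
    obtain ⟨f, hf⟩ := h2 i
    refine ⟨f, hinj ?_⟩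
    rw [map_mul, hf, ← Polynomial.eval_map_apply, hP, Polynomial.eval_mul, Polynomial.eval_C]
  refine ⟨P', ?_⟩
  have hne : (1 - Polynomial.X : Polynomial ℤ) ^ n ≠ 0 := by
    apply pow_ne_zero
    intro h
    have := congrArg (fun f => f.coeff 0) h
    simp at this
  rw [Polynomial.map_mul, Polynomial.map_C] at hP
  exact mul_left_cancel₀ (Polynomial.C_ne_zero.2 ((map_ne_zero_iff _ hinj).2 hne)) hP

/-! ### Graded pieces of a finitely generated module -/

/-- Homogeneous component maps on a module `M` over a polynomial ring: `c d` stands for the projection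
to degree `d`, and multiplication by a variable raises degrees by one. Only this compatibility is
recorded; degrees are in `ℕ`. -/
structure CompMaps (L σ M : Type*) [Field L] [AddCommGroup M] [Module L M]
    [Module (MvPolynomial σ L) M] where
  c : ℕ → M →ₗ[L] M
  c_succ : ∀ d i m, c (d + 1) ((MvPolynomial.X i : MvPolynomial σ L) • m) =
    (MvPolynomial.X i : MvPolynomial σ L) • c d m
  c_zero : ∀ i m, c 0 ((MvPolynomial.X i : MvPolynomial σ L) • m) = 0

section Graded

variable {L σ M : Type*} [Field L] [AddCommGroup M] [Module L M]
  [Module (MvPolynomial σ L) M]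

/-- A sequence of `L`-subspaces `N d` of `M` that are the graded pieces of a graded submodule: `N d` is
purely of degree `d`, and the variables map `N d` into `N (d + 1)`. -/
structure GSeq (𝒞 : CompMaps L σ M) (N : ℕ → Submodule L M) : Prop where
  hom : ∀ d, ∀ m ∈ N d, ∀ k, 𝒞.c k m = if k = d then m else 0
  mul : ∀ d i, ∀ m ∈ N d, (MvPolynomial.X i : MvPolynomial σ L) • m ∈ N (d + 1)

variable [IsScalarTower L (MvPolynomial σ L) M]

variable (L M) in
/-- Multiplication by a variable as an `L`-linear map. -/
def mulX (i : σ) : M →ₗ[L] M :=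
  ((LinearMap.lsmul (MvPolynomial σ L) M) (MvPolynomial.X i)).restrictScalars L

@[simp] lemma mulX_apply (i : σ) (m : M) :
    mulX L M i m = (MvPolynomial.X i : MvPolynomial σ L) • m := rfl

/-- The submodule of all elements whose degree `d` component lies in `N d` for every `d`. -/
def toSub (𝒞 : CompMaps L σ M) (N : ℕ → Submodule L M)
    (hN : ∀ d i, ∀ m ∈ N d, (MvPolynomial.X i : MvPolynomial σ L) • m ∈ N (d + 1)) :
    Submodule (MvPolynomial σ L) M where
  carrier := {m | ∀ d, 𝒞.c d m ∈ N d}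
  add_mem' := fun ha hb d => by rw [map_add]; exact add_mem (ha d) (hb d)
  zero_mem' := fun d => by simp
  smul_mem' := by
    intro p
    induction p using MvPolynomial.induction_on with
    | C a =>
      intro m hm d
      have : (MvPolynomial.C a : MvPolynomial σ L) • m = a • m := by
        rw [← MvPolynomial.algebraMap_eq, algebraMap_smul]
      rw [this, map_smul]
      exact Submodule.smul_mem _ _ (hm d)
    | add p q hp hq =>
      intro m hm d
      rw [add_smul, map_add]
      exact add_mem (hp hm d) (hq hm d)
    | mul_X p i hp =>
      intro m hm d
      rw [mul_smul]
      refine hp (x := (MvPolynomial.X i : MvPolynomial σ L) • m) ?_ d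
      rintro (_ | d)
      · rw [𝒞.c_zero]; exact zero_mem _
      · rw [𝒞.c_succ]; exact hN _ _ _ (hm d)

/-- The graded pieces of the submodule generated by `N 0, …, N k` (if the variables map each `N d` into
`N (d + 1)`). -/
def truncSeq (N : ℕ → Submodule L M) (k : ℕ) : ℕ → Submodule L M
  | 0 => N 0
  | d + 1 => if d + 1 ≤ k then N (d + 1) else ⨆ i : σ, (truncSeq N k d).map (mulX L M i)

lemma truncSeq_of_le (N : ℕ → Submodule L M) (k d : ℕ) (h : d ≤ k) :
    truncSeq (σ := σ) N k d = N d := by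
  cases d with
  | zero => rfl
  | succ d => simp [truncSeq, h]

lemma truncSeq_mul (N : ℕ → Submodule L M)
    (hN : ∀ d i, ∀ m ∈ N d, (MvPolynomial.X i : MvPolynomial σ L) • m ∈ N (d + 1)) (k : ℕ)
    (d : ℕ) (i : σ) (m : M) (hm : m ∈ truncSeq (σ := σ) N k d) :
    (MvPolynomial.X i : MvPolynomial σ L) • m ∈ truncSeq (σ := σ) N k (d + 1) := by
  rw [truncSeq]
  split_ifs with h
  · rw [truncSeq_of_le _ _ _ (by omega)] at hm
    exact hN _ _ _ hm
  · exact Submodule.mem_iSup_of_mem i ⟨m, hm, rfl⟩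

lemma truncSeq_mono (N : ℕ → Submodule L M)
    (hN : ∀ d i, ∀ m ∈ N d, (MvPolynomial.X i : MvPolynomial σ L) • m ∈ N (d + 1))
    (k k' : ℕ) (h : k ≤ k') (d : ℕ) :
    truncSeq (σ := σ) N k d ≤ truncSeq (σ := σ) N k' d := by
  induction d with
  | zero => exact le_rfl
  | succ d ih =>
    rw [truncSeq]
    split_ifs with h1
    · rw [truncSeq_of_le _ _ _ (by omega)]
    · refine iSup_le fun i => ?_
      rintro _ ⟨m, hm, rfl⟩
      exact truncSeq_mul N hN _ _ _ _ (ih hm)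

/-- Over a Noetherian module, a graded submodule is generated in bounded degrees. -/
lemma GSeq.eventually_generated [IsNoetherian (MvPolynomial σ L) M] {𝒞 : CompMaps L σ M}
    {N : ℕ → Submodule L M} (hN : GSeq 𝒞 N) :
    ∃ G, ∀ d ≥ G, N (d + 1) ≤ ⨆ i : σ, (N d).map (mulX L M i) := by
  let S : ℕ →o Submodule (MvPolynomial σ L) M :=
    ⟨fun k => toSub 𝒞 (truncSeq (σ := σ) N k) (truncSeq_mul N hN.mul k),
      fun k k' h m hm d => truncSeq_mono N hN.mul k k' h d (hm d)⟩
  obtain ⟨G, hG⟩ := monotone_stabilizes_iff_noetherian.2 ‹_› S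
  refine ⟨G, fun d hd m hm => ?_⟩
  have h1 : m ∈ S (d + 1) := by
    intro k
    rw [hN.hom _ _ hm]
    split_ifs with h
    · subst h
      rw [truncSeq_of_le _ _ _ le_rfl]
      exact hm
    · exact zero_mem _
  rw [← hG (d + 1) (by omega), hG d hd] at h1
  have h2 := h1 (d + 1)
  rw [hN.hom _ _ hm, if_pos rfl, truncSeq, if_neg (by omega), truncSeq_of_le _ _ _ le_rfl] at h2
  exact h2

/-- Graded pieces of high degree lie in a high power of the irrelevant ideal times `Z`. -/
lemma GSeq.eventually_le [IsNoetherian (MvPolynomial σ L) M] {𝒞 : CompMaps L σ M}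
    {N : ℕ → Submodule L M} (hN : GSeq 𝒞 N) (Z : Submodule (MvPolynomial σ L) M)
    (hZ : ∀ d, ∀ m ∈ N d, m ∈ Z) (n : ℕ) :
    ∃ G, ∀ d ≥ G, ∀ m ∈ N d,
      m ∈ (Ideal.span (Set.range (MvPolynomial.X : σ → MvPolynomial σ L))) ^ n • Z := by
  obtain ⟨G, hG⟩ := hN.eventually_generated
  induction n with
  | zero => exact ⟨0, fun d _ m hm => by simpa using hZ d m hm⟩
  | succ n ih =>
    obtain ⟨G', hG'⟩ := ih
    refine ⟨max G G' + 1, fun d hd m hm => ?_⟩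
    obtain ⟨d, rfl⟩ : ∃ d', d = d' + 1 := ⟨d - 1, by omega⟩
    have h1 := hG d (by omega) hm
    set I := Ideal.span (Set.range (MvPolynomial.X : σ → MvPolynomial σ L))
    have h2 : (⨆ i : σ, (N d).map (mulX L M i)) ≤ (I ^ (n + 1) • Z).restrictScalars L := by
      refine iSup_le fun i => ?_
      rintro _ ⟨m', hm', rfl⟩
      rw [Submodule.restrictScalars_mem, pow_succ', ← smul_eq_mul, Submodule.smul_assoc]
      exact Submodule.smul_mem_smul (Ideal.subset_span ⟨i, rfl⟩) (hG' d (by omega) _ hm')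
    exact h2 h1

open Module in
/-- The Hilbert–Serre theorem for a graded subquotient `N / N'` annihilated by the variables outside
`s`: its Hilbert series has denominator `(1 - q)^|s|`. The induction on `s` compares the kernel and the
cokernel of multiplication by one more variable; allowing subquotients keeps both of the same
shape. -/
lemma hilbertSerre [IsNoetherian (MvPolynomial σ L) M] {𝒞 : CompMaps L σ M} (s : Finset σ) :
    ∀ {N N' : ℕ → Submodule L M} (_ : GSeq 𝒞 N) (_ : GSeq 𝒞 N')
    (_ : ∀ d, N' d ≤ N d) (_ : ∀ d, FiniteDimensional L (N d))
    (_ : ∀ i ∉ s, ∀ d, ∀ m ∈ N d, (MvPolynomial.X i : MvPolynomial σ L) • m ∈ N' (d + 1)),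
    ∃ f : Polynomial ℤ, (f : PowerSeries ℤ) = ((1 - Polynomial.X : Polynomial ℤ) ^ s.card :
      Polynomial ℤ) * PowerSeries.mk fun d => (finrank L (N d) : ℤ) - finrank L (N' d) := by
  classical
  induction s using Finset.induction_on with
  | empty =>
    intro N N' hN hN' hle hfd hX
    obtain ⟨G, hG⟩ := hN.eventually_generated
    refine ⟨PowerSeries.trunc (G + 1) (PowerSeries.mk fun d =>
      (finrank L (N d) : ℤ) - finrank L (N' d)), ?_⟩
    ext d
    rw [Polynomial.coeff_coe, PowerSeries.coeff_trunc]
    simp only [Finset.card_empty, pow_zero, Polynomial.coe_one, one_mul, PowerSeries.coeff_mk]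
    split_ifs with h
    · rfl
    · obtain ⟨d, rfl⟩ : ∃ d', d = d' + 1 := ⟨d - 1, by omega⟩
      have : N (d + 1) = N' (d + 1) := by
        refine le_antisymm ((hG d (by omega)).trans (iSup_le fun i => ?_)) (hle _)
        rintro _ ⟨m, hm, rfl⟩
        exact hX i (by simp) d m hm
      rw [this, sub_self]
  | insert i s hi ih =>
    intro N N' hN hN' hle hfd hX
    -- `N / B` is the cokernel of `X i` on the subquotient, and `Cc` is the preimage of its kernel.
    let B : ℕ → Submodule L M := fun d => match d with
      | 0 => N' 0
      | d + 1 => N' (d + 1) ⊔ (N d).map (mulX L M i)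
    let Cc : ℕ → Submodule L M := fun d => N d ⊓ (N' (d + 1)).comap (mulX L M i)
    have hB : ∀ d, B d ≤ N d := by
      rintro (_ | d)
      · exact hle 0
      · refine sup_le (hle _) ?_
        rintro _ ⟨m, hm, rfl⟩
        exact hN.mul _ _ _ hm
    have hN'B : ∀ d, N' d ≤ B d := by
      rintro (_ | d)
      · exact le_rfl
      · exact le_sup_left
    have hcomm : ∀ (j k : σ) (m : M), (MvPolynomial.X j : MvPolynomial σ L) •
        (MvPolynomial.X k : MvPolynomial σ L) • m = (MvPolynomial.X k : MvPolynomial σ L) •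
        (MvPolynomial.X j : MvPolynomial σ L) • m := fun j k m => smul_comm _ _ _
    have hBG : GSeq 𝒞 B := by
      refine ⟨fun d m hm => hN.hom d m (hB d hm), fun d j m hm => ?_⟩
      cases d with
      | zero => exact Submodule.mem_sup_left (hN'.mul _ _ _ hm)
      | succ d =>
        obtain ⟨a, ha, _, ⟨b, hb, rfl⟩, rfl⟩ := Submodule.mem_sup.1 hm
        rw [smul_add]
        refine add_mem (Submodule.mem_sup_left (hN'.mul _ _ _ ha))
          (Submodule.mem_sup_right ⟨_, hN.mul _ j _ hb, ?_⟩)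
        exact hcomm _ _ _
    have hCG : GSeq 𝒞 Cc := by
      refine ⟨fun d m hm => hN.hom d m hm.1, fun d j m hm => ⟨hN.mul _ _ _ hm.1, ?_⟩⟩
      have := hN'.mul _ j _ hm.2
      simp only [mulX_apply] at this
      simpa [hcomm i j] using this
    obtain ⟨f, hf⟩ := ih hN hBG hB hfd fun j hj d m hm => by
      by_cases hji : j = i
      · subst hji
        exact Submodule.mem_sup_right ⟨m, hm, rfl⟩
      · exact hN'B _ (hX j (by simp [hj, hji]) d m hm)
    obtain ⟨g, hg⟩ := ih (N := Cc) (N' := N') hCG hN'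
      (fun d m hm => ⟨hle d hm, hN'.mul _ _ _ hm⟩)
      (fun d => Submodule.finiteDimensional_of_le (S₂ := N d) inf_le_left) fun j hj d m hm => by
      by_cases hji : j = i
      · subst hji
        exact hm.2
      · exact hX j (by simp [hj, hji]) d m hm.1
    have key : ∀ d, finrank L (B (d + 1)) + finrank L (Cc d) =
        finrank L (N' (d + 1)) + finrank L (N d) := by
      intro d
      let φ : N d →ₗ[L] M ⧸ N' (d + 1) := (N' (d + 1)).mkQ ∘ₗ (mulX L M i) ∘ₗ (N d).subtype
      have h1 := φ.finrank_range_add_finrank_ker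
      have h2 : finrank L (LinearMap.ker φ) = finrank L (Cc d) := by
        have : LinearMap.ker φ = (Cc d).comap (N d).subtype := by
          ext x
          simp [φ, Cc]
        rw [this]
        exact (Submodule.comapSubtypeEquivOfLe inf_le_left).finrank_eq
      have : FiniteDimensional L (B (d + 1)) := Submodule.finiteDimensional_of_le (hB (d + 1))
      let π : B (d + 1) →ₗ[L] M ⧸ N' (d + 1) := (N' (d + 1)).mkQ ∘ₗ (B (d + 1)).subtype
      have h3 := π.finrank_range_add_finrank_ker
      have h4 : finrank L (LinearMap.ker π) = finrank L (N' (d + 1)) := by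
        have : LinearMap.ker π = (N' (d + 1)).comap (B (d + 1)).subtype := by
          ext x
          simp [π]
        rw [this]
        exact (Submodule.comapSubtypeEquivOfLe (hN'B (d + 1))).finrank_eq
      have h5 : LinearMap.range π = LinearMap.range φ := by
        have e1 : LinearMap.range π = (B (d + 1)).map (N' (d + 1)).mkQ := by
          simp [π, LinearMap.range_comp]
        have e2 : LinearMap.range φ = ((N d).map (mulX L M i)).map (N' (d + 1)).mkQ := by
          simp [φ, LinearMap.range_comp]
        rw [e1, e2]
        simp [B, Submodule.map_sup]
      rw [h5] at h3
      omega
    refine ⟨f - Polynomial.X * g, ?_⟩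
    rw [Polynomial.coe_sub, Polynomial.coe_mul, hf, hg, Finset.card_insert_of_notMem hi,
      pow_succ, Polynomial.coe_mul, mul_assoc, mul_left_comm, ← mul_sub]
    congr 1
    ext d
    simp only [Polynomial.coe_X, Polynomial.coe_sub, Polynomial.coe_one, sub_mul, one_mul, map_sub]
    cases d with
    | zero =>
      simp [PowerSeries.coeff_zero_X_mul, B]
    | succ d =>
      simp only [PowerSeries.coeff_succ_X_mul, PowerSeries.coeff_mk]
      have := key d
      zify at this
      linarith

end Graded

/-! ### A generic homogeneous 1-form -/

section Generic
open Module

/-- Over an infinite field there are covectors `c 0, c 1, …` in general position to finitely many given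
subspaces: each such `X` of dimension `k + 1` contains a vector killed by `c 0, …, c (k - 1)` but
not by `c k`. -/
lemma exists_generic_flag {L V : Type*} [Field L] [Infinite L] [AddCommGroup V] [Module L V]
    [FiniteDimensional L V] (n : ℕ) : ∀ 𝓛 : Finset (Submodule L V),
    ∃ c : ℕ → Dual L V, ∀ X ∈ 𝓛, ∀ k < n, finrank L X = k + 1 →
      ∃ v ∈ X, (∀ j < k, c j v = 0) ∧ c k v ≠ 0 := by
  induction n with
  | zero => exact fun _ => ⟨0, fun _ _ k hk => absurd hk (by omega)⟩
  | succ n ih =>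
    intro 𝓛
    have h1 : ∀ X : {X : Submodule L V // X ∈ 𝓛 ∧ X ≠ ⊥}, ∃ v ∈ X.1, v ≠ 0 := fun X =>
      (Submodule.ne_bot_iff _).1 X.2.2
    choose v hv hv0 using h1
    have : Finite {X : Submodule L V // X ∈ 𝓛 ∧ X ≠ ⊥} :=
      Finite.of_injective (β := 𝓛) (fun X => ⟨X.1, X.2.1⟩) fun X Y h => by
        simpa [Subtype.ext_iff] using h
    obtain ⟨c0, hc0⟩ := Module.exists_dual_forall_apply_ne_zero (K := L) v hv0
    obtain ⟨c, hc⟩ := ih (𝓛.image fun X => X ⊓ LinearMap.ker c0)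
    refine ⟨fun j => Nat.casesOn j c0 c, fun X hX k hk hdim => ?_⟩
    have hXne : X ≠ ⊥ := by
      rintro rfl
      simp at hdim
    cases k with
    | zero => exact ⟨v ⟨X, hX, hXne⟩, hv ⟨X, hX, hXne⟩, by simp, hc0 _⟩
    | succ k =>
      have hfin : finrank L (X ⊓ LinearMap.ker c0 : Submodule L V) = k + 1 := by
        have e := (c0.domRestrict X).finrank_range_add_finrank_ker
        have e1 : LinearMap.range (c0.domRestrict X) = ⊤ := by
          rw [LinearMap.range_eq_top]
          refine LinearMap.surjective fun h => hc0 ⟨X, hX, hXne⟩ ?_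
          exact congrArg (fun f => f ⟨_, hv ⟨X, hX, hXne⟩⟩) h
        have e2 : LinearMap.ker (c0.domRestrict X) =
            (X ⊓ LinearMap.ker c0).comap X.subtype := by
          ext x
          simp
        rw [e1, e2, (Submodule.comapSubtypeEquivOfLe inf_le_left).finrank_eq, hdim] at e
        simp at e
        omega
      obtain ⟨w, hw, hw1, hw2⟩ := hc _ (Finset.mem_image_of_mem _ hX) k (by omega) hfin
      refine ⟨w, hw.1, ?_, hw2⟩
      rintro (_ | j) hj
      · exact hw.2
      · exact hw1 j (by omega)

variable {L : Type*} [Field L] {ℓ : ℕ}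

/-- `formPoly` as a linear map. -/
def formPolyₗ : Dual L (Fin ℓ → L) →ₗ[L] MvPolynomial (Fin ℓ) L where
  toFun := formPoly
  map_add' a b := by simp [formPoly, add_mul, Finset.sum_add_distrib]
  map_smul' a b := by simp [formPoly, Finset.mul_sum, MvPolynomial.smul_eq_C_mul, mul_assoc]

lemma formPoly_homog (φ : Dual L (Fin ℓ → L)) : (formPoly φ).IsHomogeneous 1 :=
  IsHomogeneous.sum _ _ _ fun _ _ => isHomogeneous_C_mul_X _ _

/-- The product of the linear forms of `B` that do not vanish identically on `X`. -/
def qPoly (B : Finset (Dual L (Fin ℓ → L))) (X : Submodule L (Fin ℓ → L)) :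
    MvPolynomial (Fin ℓ) L := ∏ φ ∈ B with ¬ X ≤ LinearMap.ker φ, formPoly φ

lemma qPoly_homog (B : Finset (Dual L (Fin ℓ → L))) (X : Submodule L (Fin ℓ → L)) :
    (qPoly B X).IsHomogeneous (B.filter fun φ => ¬ X ≤ LinearMap.ker φ).card := by
  have := IsHomogeneous.prod (B.filter fun φ => ¬ X ≤ LinearMap.ker φ) formPoly
    (fun _ => 1) fun φ _ => formPoly_homog φ
  simpa [qPoly] using this

/-- There are 1-forms `w`, homogeneous of any positive degree divisible by `|B|!`, such that the only
primes containing `⟨w, u⟩` whenever `u ∈ X` and `q_X ∉ P` are those containing all coordinates. The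
factorial makes the degree of each `q_X` divide that of `w`. -/
lemma exists_generic_form [Infinite L] (B : Finset (Dual L (Fin ℓ → L)))
    (hB : ∀ i, LinearMap.proj i ∈ B) (a : ℕ) (ha : 0 < a) :
    ∃ w : Fin ℓ → MvPolynomial (Fin ℓ) L, (∀ i, (w i).IsHomogeneous (a * B.card.factorial)) ∧
      ∀ P : Ideal (MvPolynomial (Fin ℓ) L), P.IsPrime →
        (∀ X : Submodule L (Fin ℓ → L), ∀ u ∈ X,
          qPoly B X ∉ P → ∑ j, C (u j) * w j ∈ P) → ∀ i, X i ∈ P := by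
  let 𝓛 : Finset (Submodule L (Fin ℓ → L)) :=
    (B.powerset.image fun D => ⨅ φ ∈ D, LinearMap.ker φ).filter (· ≠ ⊥)
  obtain ⟨c, hc⟩ := exists_generic_flag (ℓ) 𝓛
  let nX : Submodule L (Fin ℓ → L) → ℕ := fun X =>
    (B.filter fun φ => ¬ X ≤ LinearMap.ker φ).card
  have hnX : ∀ X ≠ ⊥, 0 < nX X ∧ nX X ≤ B.card := fun X hX => by
    refine ⟨Finset.card_pos.2 ?_, Finset.card_filter_le _ _⟩
    by_contra hne
    rw [Finset.not_nonempty_iff_eq_empty, Finset.filter_eq_empty_iff] at hne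
    refine hX ((Submodule.eq_bot_iff _).2 fun x hx => funext fun i => ?_)
    have := hne (hB i)
    rw [not_not] at this
    exact this hx
  let E : Submodule L (Fin ℓ → L) → ℕ := fun X => a * (B.card.factorial / nX X)
  have hE : ∀ X ≠ ⊥, nX X * E X = a * B.card.factorial := fun X hX => by
    have : nX X ∣ B.card.factorial := Nat.dvd_factorial (hnX X hX).1 (hnX X hX).2
    simp only [E]
    rw [mul_left_comm, Nat.mul_div_cancel' this]
  have hE0 : ∀ X ≠ ⊥, E X ≠ 0 := fun X hX h => by
    have := hE X hX
    rw [h, mul_zero] at this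
    have := Nat.mul_pos ha B.card.factorial_pos
    omega
  refine ⟨fun j => ∑ Y ∈ 𝓛, C (c (finrank L Y - 1) (Pi.single j 1)) * qPoly B Y ^ E Y,
    fun j => IsHomogeneous.sum _ _ _ fun Y hY => ?_, ?_⟩
  · rw [← hE Y (Finset.mem_filter.1 hY).2]
    exact ((qPoly_homog B Y).pow _).C_mul _
  intro P hP hJ
  have hsum : ∀ u : Fin ℓ → L, ∑ j, C (u j) * (∑ Y ∈ 𝓛,
      C (c (finrank L Y - 1) (Pi.single j 1)) * qPoly B Y ^ E Y) =
      ∑ Y ∈ 𝓛, C (c (finrank L Y - 1) u) * qPoly B Y ^ E Y := fun u => by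
    simp_rw [Finset.mul_sum]
    rw [Finset.sum_comm]
    refine Finset.sum_congr rfl fun Y _ => ?_
    rw [LinearMap.pi_apply_eq_sum_univ (c (finrank L Y - 1)) u, map_sum, Finset.sum_mul]
    refine Finset.sum_congr rfl fun j _ => ?_
    have : (fun j' => if j = j' then (1 : L) else 0) = Pi.single j 1 := by
      ext j'
      simp [Pi.single_apply, eq_comm]
    rw [this, smul_eq_mul, map_mul, mul_assoc]
  -- The flat on which the forms lying in `P` vanish.
  set X : Submodule L (Fin ℓ → L) := ⨅ φ ∈ B.filter (fun φ => formPoly φ ∈ P), LinearMap.ker φ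
    with hX
  have hXP : ∀ φ, X ≤ LinearMap.ker φ → formPoly φ ∈ P := fun φ hφ => by
    have h1 : φ ∈ Submodule.span L (Set.range fun φ : B.filter (fun φ => formPoly φ ∈ P) =>
        φ.1) := by
      refine mem_span_of_iInf_ker_le_ker (le_trans (le_of_eq ?_) hφ)
      rw [hX, iInf_subtype]
    have h2 : Submodule.span L (Set.range fun φ : B.filter (fun φ => formPoly φ ∈ P) =>
        φ.1) ≤ (P.restrictScalars L).comap formPolyₗ := by
      rw [Submodule.span_le]
      rintro _ ⟨ψ, rfl⟩
      exact (Finset.mem_filter.1 ψ.2).2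
    exact h2 h1
  have hPX : ∀ φ ∈ B, formPoly φ ∈ P → X ≤ LinearMap.ker φ := fun φ hφ h =>
    iInf₂_le φ (Finset.mem_filter.2 ⟨hφ, h⟩)
  have hq : qPoly B X ∉ P := fun h => by
    obtain ⟨φ, hφ, h⟩ := (hP.prod_mem_iff).1 h
    rw [Finset.mem_filter] at hφ
    exact hφ.2 (hPX φ hφ.1 h)
  by_cases hbot : X = ⊥
  · intro i
    have := hXP (LinearMap.proj i) (by rw [hbot]; exact bot_le)
    simpa [formPoly, Pi.single_apply] using this
  exfalso
  have hX𝓛 : X ∈ 𝓛 := Finset.mem_filter.2 ⟨Finset.mem_image.2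
    ⟨_, Finset.mem_powerset.2 (Finset.filter_subset _ _), rfl⟩, hbot⟩
  have hdim : 0 < finrank L X := Nat.pos_of_ne_zero fun h =>
    hbot (Submodule.finrank_eq_zero.1 h)
  obtain ⟨v, hv, hv1, hv2⟩ := hc X hX𝓛 (finrank L X - 1)
    (by have := Submodule.finrank_le X; simp at this; omega) (by omega)
  have h1 := hJ X v hv hq
  rw [hsum, ← Finset.add_sum_erase _ _ hX𝓛] at h1
  -- Terms with `dim Y < dim X` vanish by the choice of `v`; otherwise `Y` is not contained in `X`,
  -- and `q_Y` has a factor vanishing on `X`.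
  have h2 : ∑ Y ∈ 𝓛.erase X, C (c (finrank L Y - 1) v) * qPoly B Y ^ E Y ∈ P := by
    refine sum_mem fun Y hY => ?_
    obtain ⟨hYX, hY𝓛⟩ := Finset.mem_erase.1 hY
    have hYbot : Y ≠ ⊥ := (Finset.mem_filter.1 hY𝓛).2
    by_cases hlt : finrank L Y < finrank L X
    · have : 0 < finrank L Y := Nat.pos_of_ne_zero fun h =>
        hYbot (Submodule.finrank_eq_zero.1 h)
      rw [hv1 _ (by omega), C_0, zero_mul]
      exact zero_mem _
    · refine Ideal.mul_mem_left _ _ (Ideal.pow_mem_of_mem _ ?_ _ (Nat.pos_of_ne_zero (hE0 Y hYbot)))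
      have : ∃ φ ∈ B, X ≤ LinearMap.ker φ ∧ ¬ Y ≤ LinearMap.ker φ := by
        by_contra! hcon
        refine hYX (Submodule.eq_of_le_of_finrank_le ?_ (not_lt.1 hlt))
        rw [hX]
        refine le_iInf₂ fun φ hφ => ?_
        obtain ⟨h3, h4⟩ := Finset.mem_filter.1 hφ
        exact hcon φ h3 (hPX φ h3 h4)
      obtain ⟨φ, hφ, hφX, hφY⟩ := this
      exact Ideal.mem_of_dvd _ (Finset.dvd_prod_of_mem _ (Finset.mem_filter.2 ⟨hφ, hφY⟩))
        (hXP φ hφX)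
  have h3 := (P.add_mem_iff_left h2).1 h1
  rcases hP.mem_or_mem h3 with h | h
  · exact hP.ne_top (Ideal.eq_top_of_isUnit_mem _ h ((isUnit_iff_ne_zero.2 hv2).map C))
  · exact hq (hP.mem_of_pow_mem _ h)

end Generic

/-! ### Alternating forms, contraction and wedge product -/

section Forms
open Module

lemma hc_mul {L σ : Type*} [Field L] {n : ℕ} {φ : MvPolynomial σ L} (hφ : φ.IsHomogeneous n)
    (d : ℕ) (p : MvPolynomial σ L) :
    homogeneousComponent d (φ * p) = if n ≤ d then φ * homogeneousComponent (d - n) p else 0 := by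
  conv_lhs => rw [← sum_homogeneousComponent p, Finset.mul_sum, map_sum]
  have h1 : ∀ i, homogeneousComponent d (φ * homogeneousComponent i p) =
      if d = n + i then φ * homogeneousComponent i p else 0 := fun i => by
    refine homogeneousComponent_of_mem ?_
    rw [mem_homogeneousSubmodule]
    exact hφ.mul (homogeneousComponent_isHomogeneous _ _)
  simp_rw [h1]
  split_ifs with h
  · have : ∀ i, (d = n + i) = (d - n = i) := fun i => by
      apply propext; omega
    simp_rw [this, Finset.sum_ite_eq, Finset.mem_range]
    split_ifs with h2
    · rfl
    · rw [homogeneousComponent_eq_zero _ _ (by omega), mul_zero]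
  · exact Finset.sum_eq_zero fun i _ => if_neg (by omega)

variable (K : Type*) [Field K] (L : Type*) [Field L] [Algebra K L] (ℓ : ℕ)

/-- Alternating maps from linear forms on `K^ℓ` to polynomials over the extension field `L`. These
encode `Der^p` of `L[x]` by the values on linear forms; the arguments are kept over `K`, which changes
nothing since a basis of the linear forms over `K` is one over `L`. -/
abbrev AltFrm (p : ℕ) : Type _ := (Dual K (Fin ℓ → K)) [⋀^Fin p]→ₗ[K] MvPolynomial (Fin ℓ) L

instance (p : ℕ) : IsScalarTower L (MvPolynomial (Fin ℓ) L) (AltFrm K L ℓ p) :=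
  ⟨fun a b g => AlternatingMap.ext fun v => smul_assoc a b (g v)⟩

variable {K L ℓ}

/-- The extension of a linear functional from `K^ℓ` to `L^ℓ`. -/
def extDual (φ : Dual K (Fin ℓ → K)) : Dual L (Fin ℓ → L) :=
  ∑ i, algebraMap K L (φ (Pi.single i 1)) • LinearMap.proj i

variable (L) in
/-- The linear form over `L` of a linear functional over `K`. -/
def lf (φ : Dual K (Fin ℓ → K)) : MvPolynomial (Fin ℓ) L := formPoly (extDual (L := L) φ)

lemma extDual_apply (φ : Dual K (Fin ℓ → K)) (u : Fin ℓ → L) :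
    extDual φ u = ∑ i, algebraMap K L (φ (Pi.single i 1)) * u i := by
  simp [extDual, LinearMap.sum_apply, -algebraMap_smul]

lemma lf_eq (φ : Dual K (Fin ℓ → K)) : lf L φ = map (algebraMap K L) (formPoly φ) := by
  simp [lf, formPoly, extDual_apply, Pi.single_apply]

/-- The module `D^p(A,m)` with coefficients extended to `L`, in terms of values on linear forms. -/
def DT (L : Type*) [Field L] [Algebra K L] (A : MultiArr K ℓ) (p : ℕ) :
    Submodule (MvPolynomial (Fin ℓ) L) (AltFrm K L ℓ p) where
  carrier := {g | ∀ φ ∈ A.duals, ∀ v : Fin p → Dual K (Fin ℓ → K), ∀ i, v i = φ →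
    g v ∈ Ideal.span {lf L φ ^ A.mult φ}}
  add_mem' := fun ha hb φ hφ v i hv => by simpa using add_mem (ha φ hφ v i hv) (hb φ hφ v i hv)
  zero_mem' := fun φ hφ v i hv => by simp
  smul_mem' := fun c g hg φ hφ v i hv => by
    simpa using Ideal.mul_mem_left _ c (hg φ hφ v i hv)

variable (K L ℓ) in
/-- The alternating maps whose values are homogeneous of degree `d`. -/
def homFrm (p d : ℕ) : Submodule L (AltFrm K L ℓ p) where
  carrier := {g | ∀ v, (g v).IsHomogeneous d}
  add_mem' := fun ha hb v => (ha v).add (hb v)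
  zero_mem' := fun v => isHomogeneous_zero _ _ _
  smul_mem' := fun c g hg v => by
    simpa [MvPolynomial.smul_eq_C_mul] using (hg v).C_mul c

/-- The degree `d` part of `DT L A p`. -/
def UL (L : Type*) [Field L] [Algebra K L] (A : MultiArr K ℓ) (p d : ℕ) :
    Submodule L (AltFrm K L ℓ p) := (DT L A p).restrictScalars L ⊓ homFrm K L ℓ p d

variable (K L ℓ) in
/-- The valuewise homogeneous components. -/
def compFrm (p : ℕ) : CompMaps L (Fin ℓ) (AltFrm K L ℓ p) where
  c d :=
    { toFun := fun g => ((homogeneousComponent d).restrictScalars K).compAlternatingMap g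
      map_add' := fun a b => by ext v; simp
      map_smul' := fun a b => by ext v; simp }
  c_succ d i g := by
    ext1 v
    simp [hc_mul (isHomogeneous_X L i)]
  c_zero i g := by
    ext1 v
    simp [hc_mul (isHomogeneous_X L i)]

@[simp] lemma compFrm_apply (p d : ℕ) (g : AltFrm K L ℓ p) (v) :
    (compFrm K L ℓ p).c d g v = homogeneousComponent d (g v) := rfl

lemma compFrm_of_mem {p d : ℕ} {g : AltFrm K L ℓ p} (hg : g ∈ homFrm K L ℓ p d) (k : ℕ) :
    (compFrm K L ℓ p).c k g = if k = d then g else 0 := by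
  ext1 v
  rw [compFrm_apply, homogeneousComponent_of_mem ((mem_homogeneousSubmodule _ _).2 (hg v))]
  split_ifs <;> rfl

lemma compFrm_mem_UL {A : MultiArr K ℓ} {p : ℕ} {g : AltFrm K L ℓ p} (hg : g ∈ DT L A p) (d : ℕ) :
    (compFrm K L ℓ p).c d g ∈ UL L A p d := by
  refine ⟨fun φ hφ v i hv => ?_, fun v => homogeneousComponent_isHomogeneous _ _⟩
  obtain ⟨a, ha⟩ := Ideal.mem_span_singleton'.1 (hg φ hφ v i hv)
  have hh : (lf L φ ^ A.mult φ).IsHomogeneous (1 * A.mult φ) :=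
    (formPoly_homog (extDual (L := L) φ)).pow (A.mult φ)
  rw [compFrm_apply, ← ha, mul_comm a, hc_mul hh]
  split_ifs
  · exact Ideal.mul_mem_right _ _ (Ideal.subset_span rfl)
  · exact zero_mem _

lemma X_smul_mem_homFrm {p d : ℕ} {g : AltFrm K L ℓ p} (hg : g ∈ homFrm K L ℓ p d) (i : Fin ℓ) :
    (X i : MvPolynomial (Fin ℓ) L) • g ∈ homFrm K L ℓ p (d + 1) := fun v => by
  rw [add_comm]
  exact (isHomogeneous_X L i).mul (hg v)

variable (K ℓ) in
/-- The basis of coordinate functions of the dual of `K^ℓ`. -/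
abbrev dualB : Basis (Fin ℓ) K (Dual K (Fin ℓ → K)) := (Pi.basisFun K (Fin ℓ)).dualBasis

lemma dualB_apply (i : Fin ℓ) : dualB K ℓ i = LinearMap.proj i := by
  ext j
  simp [dualB]

variable (K L ℓ) in
/-- The values of an alternating map on coordinate functions. -/
def evFrm (p : ℕ) : AltFrm K L ℓ p →ₗ[MvPolynomial (Fin ℓ) L]
    ((Fin p → Fin ℓ) → MvPolynomial (Fin ℓ) L) where
  toFun g j := g fun i => dualB K ℓ (j i)
  map_add' _ _ := rfl
  map_smul' _ _ := rfl

lemma evFrm_injective (p : ℕ) : Function.Injective (evFrm K L ℓ p) := fun _ _ h =>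
  Basis.ext_alternating (dualB K ℓ) fun v _ => congrFun h v

instance (p : ℕ) : IsNoetherian (MvPolynomial (Fin ℓ) L) (AltFrm K L ℓ p) :=
  isNoetherian_of_injective _ (evFrm_injective p)

instance (p d : ℕ) : FiniteDimensional L (homFrm K L ℓ p d) := by
  have : FiniteDimensional L (homogeneousSubmodule (Fin ℓ) L d) :=
    Module.Finite.iff_fg.2 (homogeneousSubmodule_fg _ _ _)
  let f : homFrm K L ℓ p d →ₗ[L] ((Fin p → Fin ℓ) → homogeneousSubmodule (Fin ℓ) L d) :=
    { toFun := fun g j => ⟨g.1 fun i => dualB K ℓ (j i), g.2 _⟩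
      map_add' := fun _ _ => rfl
      map_smul' := fun _ _ => rfl }
  refine FiniteDimensional.of_injective f fun a b h => Subtype.ext (evFrm_injective p ?_)
  ext1 j
  exact congrArg Subtype.val (congrFun h j)

instance (A : MultiArr K ℓ) (p d : ℕ) : FiniteDimensional L (UL L A p d) :=
  Submodule.finiteDimensional_of_le (S₂ := homFrm K L ℓ p d) inf_le_right

lemma gseq_of (p : ℕ) (Z : Submodule (MvPolynomial (Fin ℓ) L) (AltFrm K L ℓ p)) :
    GSeq (compFrm K L ℓ p) fun d => Z.restrictScalars L ⊓ homFrm K L ℓ p d :=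
  ⟨fun _ _ hm k => compFrm_of_mem hm.2 k,
    fun _ i _ hm => ⟨Z.smul_mem _ hm.1, X_smul_mem_homFrm hm.2 i⟩⟩

/-- Contraction with the 1-form `∑ w_j dx_j`: the coordinate `x_j` is inserted in the first slot, with
weight `w_j`. -/
def contr (w : Fin ℓ → MvPolynomial (Fin ℓ) L) (p : ℕ) :
    AltFrm K L ℓ (p + 1) →ₗ[MvPolynomial (Fin ℓ) L] AltFrm K L ℓ p where
  toFun g := ∑ j, w j • g.curryLeft (LinearMap.proj j)
  map_add' a b := by simp [Finset.sum_add_distrib]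
  map_smul' a b := by
    simp only [RingHom.id_apply, Finset.smul_sum]
    refine Finset.sum_congr rfl fun j _ => ?_
    rw [smul_comm]
    rfl

lemma contr_apply (w : Fin ℓ → MvPolynomial (Fin ℓ) L) (p : ℕ) (g : AltFrm K L ℓ (p + 1)) (v) :
    contr w p g v = ∑ j, w j * g (Matrix.vecCons (LinearMap.proj j) v) := by
  let ev : AltFrm K L ℓ p →+ MvPolynomial (Fin ℓ) L := ⟨⟨fun g => g v, rfl⟩, fun _ _ => rfl⟩
  exact map_sum ev _ _

lemma contr_mem_DT (w : Fin ℓ → MvPolynomial (Fin ℓ) L) (A : MultiArr K ℓ) (p : ℕ)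
    {g : AltFrm K L ℓ (p + 1)} (hg : g ∈ DT L A (p + 1)) : contr w p g ∈ DT L A p := by
  intro φ hφ v i hv
  rw [contr_apply]
  exact sum_mem fun j _ => Ideal.mul_mem_left _ _ (hg φ hφ _ i.succ (by simpa using hv))

lemma contr_mem_hom {w : Fin ℓ → MvPolynomial (Fin ℓ) L} {e : ℕ} (hw : ∀ i, (w i).IsHomogeneous e)
    {p d : ℕ} {g : AltFrm K L ℓ (p + 1)} (hg : g ∈ homFrm K L ℓ (p + 1) d) :
    contr w p g ∈ homFrm K L ℓ p (d + e) := by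
  intro v
  rw [contr_apply, add_comm d e]
  exact IsHomogeneous.sum _ _ _ fun j _ => (hw j).mul (hg _)

lemma contr_comp {w : Fin ℓ → MvPolynomial (Fin ℓ) L} {e : ℕ} (hw : ∀ i, (w i).IsHomogeneous e)
    {p d : ℕ} (h : e ≤ d) (g : AltFrm K L ℓ (p + 1)) :
    (compFrm K L ℓ p).c d (contr w p g) = contr w p ((compFrm K L ℓ (p + 1)).c (d - e) g) := by
  ext1 v
  simp only [compFrm_apply, contr_apply, map_sum]
  exact Finset.sum_congr rfl fun j _ => by rw [hc_mul (hw j), if_pos h]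

/-- The wedge product `u ∧ g` with the constant vector field `u`. -/
def wdg (u : Fin ℓ → L) {p : ℕ} (g : AltFrm K L ℓ p) : AltFrm K L ℓ (p + 1) :=
  AlternatingMap.alternatizeUncurryFin
    { toFun := fun φ => (C (extDual φ u) : MvPolynomial (Fin ℓ) L) • g
      map_add' := fun a b => by
        simp [extDual_apply, add_mul, Finset.sum_add_distrib, add_smul]
      map_smul' := fun a b => by
        ext1 v
        simp only [extDual_apply, LinearMap.smul_apply, smul_eq_mul, map_mul, mul_assoc,
          ← Finset.mul_sum, AlternatingMap.smul_apply, RingHom.id_apply]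
        rw [Algebra.smul_def, IsScalarTower.algebraMap_apply K L (MvPolynomial (Fin ℓ) L),
          MvPolynomial.algebraMap_eq] }

lemma wdg_apply (u : Fin ℓ → L) {p : ℕ} (g : AltFrm K L ℓ p) (v) :
    wdg u g v = ∑ i : Fin (p + 1), (-1) ^ (i : ℕ) * (C (extDual (v i) u) * g (i.removeNth v)) := by
  simp [wdg, AlternatingMap.alternatizeUncurryFin_apply]

lemma extDual_proj (j : Fin ℓ) (u : Fin ℓ → L) :
    extDual (K := K) (LinearMap.proj j) u = u j := by
  simp [extDual_apply, Pi.single_apply]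

lemma contr_wdg_zero (w : Fin ℓ → MvPolynomial (Fin ℓ) L) (u : Fin ℓ → L) (g : AltFrm K L ℓ 0) :
    contr w 0 (wdg u g) = (∑ j, C (u j) * w j) • g := by
  ext1 v
  rw [contr_apply, AlternatingMap.smul_apply, smul_eq_mul, Finset.sum_mul]
  refine Finset.sum_congr rfl fun j _ => ?_
  rw [wdg_apply]
  have : ((0 : Fin 1).removeNth (Matrix.vecCons (LinearMap.proj j) v)) = v := Subsingleton.elim _ _
  simp [extDual_proj, this]
  ring

/-- Wedging with `u` is a homotopy for multiplication by `⟨w, u⟩` on the contraction complex. -/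
lemma contr_wdg_succ (w : Fin ℓ → MvPolynomial (Fin ℓ) L) (u : Fin ℓ → L) (p : ℕ)
    (g : AltFrm K L ℓ (p + 1)) :
    contr w (p + 1) (wdg u g) + wdg u (contr w p g) = (∑ j, C (u j) * w j) • g := by
  ext1 v
  simp only [AlternatingMap.add_apply, AlternatingMap.smul_apply, contr_apply, wdg_apply,
    smul_eq_mul, Finset.sum_mul, Finset.mul_sum]
  rw [Finset.sum_comm (s := Finset.univ (α := Fin (p + 1))), ← Finset.sum_add_distrib]
  refine Finset.sum_congr rfl fun j _ => ?_
  rw [Fin.sum_univ_succ]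
  have h0 : ((0 : Fin (p + 2)).removeNth (Matrix.vecCons (LinearMap.proj j) v)) = v := by
    ext1 k
    simp [Fin.removeNth]
  have h1 : ∀ i : Fin (p + 1), (i.succ.removeNth (Matrix.vecCons
      (LinearMap.proj (R := K) (φ := fun _ => K) j) v)) =
      Matrix.vecCons (LinearMap.proj j) (i.removeNth v) := by
    intro i
    ext1 k
    refine Fin.cases ?_ (fun k => ?_) k <;> simp [Fin.removeNth]
  simp only [h0, h1, Matrix.cons_val_zero, Matrix.cons_val_succ, extDual_proj, Fin.val_zero,
    pow_zero, one_mul, Fin.val_succ]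
  rw [add_assoc, ← Finset.sum_add_distrib, Finset.sum_eq_zero, add_zero]
  · ring
  · intro i _
    ring

/-- For `u ∈ X`, wedging with `q_X^M u` preserves the divisibility conditions: the term of `u ∧ g` in
which `u` meets the form `φ` vanishes if `φ` is zero on `X`, and otherwise `φ` divides `q_X`. -/
lemma wdg_mem (A : MultiArr K ℓ) (B : Finset (Dual L (Fin ℓ → L)))
    (hB : ∀ φ ∈ A.duals, extDual φ ∈ B) (M : ℕ) (hM : ∀ φ ∈ A.duals, A.mult φ ≤ M)
    (X : Submodule L (Fin ℓ → L)) (u : Fin ℓ → L) (hu : u ∈ X) {p : ℕ} {g : AltFrm K L ℓ p}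
    (hg : g ∈ DT L A p) : qPoly B X ^ M • wdg u g ∈ DT L A (p + 1) := by
  intro φ hφ v i hv
  rw [AlternatingMap.smul_apply, smul_eq_mul, wdg_apply, Finset.mul_sum]
  refine sum_mem fun k _ => ?_
  by_cases hk : k = i
  · subst hk
    by_cases hX : X ≤ LinearMap.ker (extDual (L := L) φ)
    · have : extDual φ u = 0 := hX hu
      rw [hv, this]
      simp
    · refine Ideal.mul_mem_right _ _ (Ideal.mem_span_singleton.2 ?_)
      refine (pow_dvd_pow _ (hM φ hφ)).trans (pow_dvd_pow_of_dvd ?_ _)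
      exact Finset.dvd_prod_of_mem formPoly (Finset.mem_filter.2 ⟨hB φ hφ, hX⟩)
  · refine Ideal.mul_mem_left _ _ (Ideal.mul_mem_left _ _ (Ideal.mul_mem_left _ _ ?_))
    obtain ⟨i', rfl⟩ := Fin.exists_succAbove_eq (Ne.symm hk)
    exact hg φ hφ _ i' (by simpa [Fin.removeNth] using hv)

end Forms

/-! ### Exactness in large degrees and the Euler characteristic -/

section Exact
open Module
variable {K : Type*} [Field K] {L : Type*} [Field L] [Algebra K L] {ℓ : ℕ}

/-- The cycles of the complex formed by the `DT L A p` and contraction with `w`; everything is a cycle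
for `p = 0`. -/
def ZF (L : Type*) [Field L] [Algebra K L] (A : MultiArr K ℓ) (w : Fin ℓ → MvPolynomial (Fin ℓ) L) :
    ∀ p, Submodule (MvPolynomial (Fin ℓ) L) (AltFrm K L ℓ p)
  | 0 => DT L A 0
  | p + 1 => DT L A (p + 1) ⊓ LinearMap.ker (contr w p)

lemma ZF_le (A : MultiArr K ℓ) (w : Fin ℓ → MvPolynomial (Fin ℓ) L) (p : ℕ) :
    ZF L A w p ≤ DT L A p := by
  cases p with
  | zero => exact le_rfl
  | succ p => exact inf_le_left

lemma contr_wdg_cycle (A : MultiArr K ℓ) (w : Fin ℓ → MvPolynomial (Fin ℓ) L) (u : Fin ℓ → L)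
    (p : ℕ) {g : AltFrm K L ℓ p} (hg : g ∈ ZF L A w p) :
    contr w p (wdg u g) = (∑ j, C (u j) * w j) • g := by
  cases p with
  | zero => exact contr_wdg_zero w u g
  | succ p =>
    have h0 : contr w p g = 0 := hg.2
    have h1 : wdg u (0 : AltFrm K L ℓ p) = 0 := by
      ext1 v
      simp [wdg_apply]
    have := contr_wdg_succ w u p g
    rwa [h0, h1, add_zero] at this

/-- The complex is exact in all large degrees. The annihilator of the homology contains all
`q_X^M ⟨w, u⟩`, so by `hP` its radical contains every coordinate, and hence it contains a power of
the irrelevant ideal, while cycles of large degree lie in that power times the module of cycles. -/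
lemma exact_large (A : MultiArr K ℓ) (w : Fin ℓ → MvPolynomial (Fin ℓ) L) {e : ℕ}
    (hw : ∀ i, (w i).IsHomogeneous e) (B : Finset (Dual L (Fin ℓ → L)))
    (hB : ∀ φ ∈ A.duals, extDual φ ∈ B)
    (hP : ∀ P : Ideal (MvPolynomial (Fin ℓ) L), P.IsPrime →
        (∀ X : Submodule L (Fin ℓ → L), ∀ u ∈ X,
          qPoly B X ∉ P → ∑ j, C (u j) * w j ∈ P) → ∀ i, X i ∈ P) (p : ℕ) :
    ∃ D, ∀ d ≥ D, e ≤ d ∧ ∀ g ∈ ZF L A w p, g ∈ homFrm K L ℓ p d →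
      ∃ h ∈ UL L A (p + 1) (d - e), contr w p h = g := by
  let Im : Submodule (MvPolynomial (Fin ℓ) L) (AltFrm K L ℓ p) :=
    (DT L A (p + 1)).map (contr w p)
  let I : Ideal (MvPolynomial (Fin ℓ) L) := Im.colon (ZF L A w p)
  have hI : ∀ s, s ∈ I ↔ ∀ g ∈ ZF L A w p, s • g ∈ Im := fun s => by
    simp only [I, Submodule.mem_colon]
    rfl
  let M := A.duals.sup A.mult
  have hmem : ∀ X : Submodule L (Fin ℓ → L), ∀ u ∈ X,
      qPoly B X ^ M * ∑ j, C (u j) * w j ∈ I := by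
    intro X u hu
    rw [hI]
    intro g hg
    refine ⟨qPoly B X ^ M • wdg u g, wdg_mem A B hB M (fun φ hφ => Finset.le_sup hφ) X u hu
      (ZF_le A w p hg), ?_⟩
    rw [map_smul, contr_wdg_cycle A w u p hg, smul_smul]
  have hrad : Ideal.span (Set.range (X : Fin ℓ → MvPolynomial (Fin ℓ) L)) ≤ I.radical := by
    rw [Ideal.span_le]
    rintro _ ⟨i, rfl⟩
    rw [SetLike.mem_coe, Ideal.radical_eq_sInf, Submodule.mem_sInf]
    rintro P ⟨hIP, hPp⟩
    refine hP P hPp (fun X u hu hq => ?_) i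
    exact (hPp.mem_or_mem (hIP (hmem X u hu))).resolve_left fun h => hq (hPp.mem_of_pow_mem _ h)
  obtain ⟨n, hn⟩ := Ideal.exists_pow_le_of_le_radical_of_fg hrad
    (IsNoetherian.noetherian _)
  obtain ⟨G, hG⟩ := (gseq_of p (ZF L A w p)).eventually_le (ZF L A w p) (fun d m hm => hm.1) n
  refine ⟨max G e, fun d hd => ⟨le_trans (le_max_right _ _) hd, fun g hg hgd => ?_⟩⟩
  have h1 : g ∈ Im := by
    have := hG d (le_trans (le_max_left _ _) hd) g ⟨hg, hgd⟩
    refine Submodule.smul_le.2 (fun r hr m hm => ?_) this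
    exact (hI r).1 (hn hr) m hm
  obtain ⟨h, hh, rfl⟩ := h1
  refine ⟨_, compFrm_mem_UL hh (d - e), ?_⟩
  rw [← contr_comp hw (le_trans (le_max_right _ _) hd), compFrm_of_mem hgd, if_pos rfl]

lemma contr_contr (w : Fin ℓ → MvPolynomial (Fin ℓ) L) (p : ℕ) (g : AltFrm K L ℓ (p + 2)) :
    contr w p (contr w (p + 1) g) = 0 := by
  ext1 v
  simp only [contr_apply, Finset.mul_sum, AlternatingMap.zero_apply]
  rw [← Finset.sum_product']
  refine Finset.sum_involution (fun x _ => (x.2, x.1)) ?_ ?_ (fun _ _ => Finset.mem_univ _)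
    (fun _ _ => rfl)
  · rintro ⟨i, j⟩ -
    have := g.map_swap (Matrix.vecCons (LinearMap.proj j) (Matrix.vecCons (LinearMap.proj i) v))
      (i := 0) (j := 1) (by simp)
    have h2 : (Matrix.vecCons (LinearMap.proj (R := K) (φ := fun _ => K) j)
        (Matrix.vecCons (LinearMap.proj i) v)) ∘
        Equiv.swap (0 : Fin (p + 2)) 1 =
        (Matrix.vecCons (LinearMap.proj i) (Matrix.vecCons (LinearMap.proj j) v)) := by
      ext1 k
      refine Fin.cases ?_ (fun k => Fin.cases ?_ (fun k => ?_) k) k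
      · simp
      · simp
      · rw [Function.comp_apply, Equiv.swap_apply_of_ne_of_ne]
        · simp
        · simp
        · simp [Fin.ext_iff]
    rw [h2] at this
    simp only [this]
    ring
  · rintro ⟨i, j⟩ - hne
    simp only [ne_eq, Prod.mk.injEq, not_and]
    rintro rfl
    exfalso
    apply hne
    rw [g.map_eq_zero_of_eq _ (i := 0) (j := 1) (by simp) (by simp)]
    simp

lemma altFrm_eq_zero {p : ℕ} (hp : ℓ < p) (g : AltFrm K L ℓ p) : g = 0 :=
  Basis.ext_alternating (dualB K ℓ) fun v hv => absurd (Fintype.card_le_of_injective v hv) (by simpa)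

lemma finrank_UL_zero (A : MultiArr K ℓ) {p : ℕ} (hp : ℓ < p) (d : ℕ) :
    finrank L (UL L A p d) = 0 := by
  have : UL L A p d = ⊥ := (Submodule.eq_bot_iff _).2 fun g _ => altFrm_eq_zero hp g
  rw [this, finrank_bot]

/-- The dimension of the space of cycles of degree `d`. -/
def zdim (L : Type*) [Field L] [Algebra K L] (A : MultiArr K ℓ) (w : Fin ℓ → MvPolynomial (Fin ℓ) L)
    (p d : ℕ) : ℕ := finrank L ↥((ZF L A w p).restrictScalars L ⊓ homFrm K L ℓ p d)

lemma finrank_split {M M' : Type*} [AddCommGroup M] [Module L M] [AddCommGroup M'] [Module L M']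
    (f : M →ₗ[L] M') (P : Submodule L M) [FiniteDimensional L P] (R : Submodule L M)
    (Q : Submodule L M') (hR : ∀ x, x ∈ R ↔ x ∈ P ∧ f x = 0) (hQ : ∀ y, y ∈ Q ↔ ∃ x ∈ P, f x = y) :
    finrank L P = finrank L R + finrank L Q := by
  rw [← LinearMap.finrank_range_add_finrank_ker (f.domRestrict P), add_comm]
  congr 1
  · refine LinearEquiv.finrank_eq (M := LinearMap.ker (f.domRestrict P)) (N := R)
      { toFun := fun x => ⟨x.1.1, (hR _).2 ⟨x.1.2, x.2⟩⟩
        invFun := fun y => ⟨⟨y.1, ((hR _).1 y.2).1⟩, ((hR _).1 y.2).2⟩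
        map_add' := fun _ _ => rfl
        map_smul' := fun _ _ => rfl
        left_inv := fun _ => rfl
        right_inv := fun _ => rfl }
  · have : LinearMap.range (f.domRestrict P) = Q := by
      ext y
      rw [hQ]
      exact ⟨fun ⟨x, hx⟩ => ⟨x.1, x.2, hx⟩, fun ⟨x, hx, hy⟩ => ⟨⟨x, hx⟩, hy⟩⟩
    rw [this]

/-- In a degree where the complex is exact at `p`, rank-nullity for contraction expresses the dimension
of `D^(p+1)` by dimensions of cycles. -/
lemma finrank_UL_succ (A : MultiArr K ℓ) (w : Fin ℓ → MvPolynomial (Fin ℓ) L) {e : ℕ}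
    (hw : ∀ i, (w i).IsHomogeneous e) (p d : ℕ)
    (hex : e ≤ d ∧ ∀ g ∈ ZF L A w p, g ∈ homFrm K L ℓ p d →
      ∃ h ∈ UL L A (p + 1) (d - e), contr w p h = g) :
    finrank L (UL L A (p + 1) (d - e)) = zdim L A w (p + 1) (d - e) + zdim L A w p d := by
  refine finrank_split (M := AltFrm K L ℓ (p + 1)) (M' := AltFrm K L ℓ p)
    ((contr w p).restrictScalars L) (UL L A (p + 1) (d - e)) _ _ (fun g => ?_) (fun g => ?_)
  · exact ⟨fun h => ⟨⟨h.1.1, h.2⟩, h.1.2⟩, fun h => ⟨⟨h.1.1, h.2⟩, h.1.2⟩⟩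
  · refine ⟨fun h => hex.2 g h.1 h.2, ?_⟩
    rintro ⟨g, hg, rfl⟩
    have hd := contr_mem_hom hw hg.2
    rw [Nat.sub_add_cancel hex.1] at hd
    refine ⟨?_, hd⟩
    cases p with
    | zero => exact contr_mem_DT w A 0 hg.1
    | succ p => exact ⟨contr_mem_DT w A _ hg.1, contr_contr w p g⟩

/-- The graded Euler characteristic of the complex vanishes in large degrees. -/
lemma euler_zero (A : MultiArr K ℓ) (w : Fin ℓ → MvPolynomial (Fin ℓ) L) {e : ℕ}
    (hw : ∀ i, (w i).IsHomogeneous e) (B : Finset (Dual L (Fin ℓ → L)))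
    (hB : ∀ φ ∈ A.duals, extDual φ ∈ B)
    (hP : ∀ P : Ideal (MvPolynomial (Fin ℓ) L), P.IsPrime →
        (∀ X : Submodule L (Fin ℓ → L), ∀ u ∈ X,
          qPoly B X ∉ P → ∑ j, C (u j) * w j ∈ P) → ∀ i, X i ∈ P) :
    ∃ D, ∀ d ≥ D, ℓ * e ≤ d ∧
      ∑ p ∈ Finset.range (ℓ + 1), (-1) ^ p * (finrank L (UL L A p (d - p * e)) : ℤ) = 0 := by
  choose D hD using exact_large A w hw B hB hP
  refine ⟨(Finset.range (ℓ + 1)).sup D + ℓ * e, fun d hd => ⟨by omega, ?_⟩⟩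
  have hDp : ∀ p ≤ ℓ, D p ≤ d - p * e := fun p hp => by
    have h1 : D p ≤ (Finset.range (ℓ + 1)).sup D :=
      Finset.le_sup (f := D) (Finset.mem_range.2 (by omega))
    have h2 : p * e ≤ ℓ * e := Nat.mul_le_mul_right _ hp
    omega
  have key : ∀ p ≤ ℓ, finrank L (UL L A (p + 1) (d - (p + 1) * e)) =
      zdim L A w (p + 1) (d - (p + 1) * e) + zdim L A w p (d - p * e) := fun p hp => by
    have := finrank_UL_succ A w hw p (d - p * e) (hD p _ (hDp p hp))
    rwa [Nat.sub_sub, ← Nat.succ_mul] at this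
  have part : ∀ n ≤ ℓ, ∑ p ∈ Finset.range (n + 1),
      (-1) ^ p * (finrank L (UL L A p (d - p * e)) : ℤ) =
      (-1) ^ n * (zdim L A w n (d - n * e) : ℤ) := by
    intro n
    induction n with
    | zero =>
      intro _
      rw [zero_add, Finset.sum_range_one, Nat.zero_mul]
      rfl
    | succ n ih =>
      intro hn
      rw [Finset.sum_range_succ, ih (by omega), key n (by omega)]
      push_cast
      ring
  rw [part ℓ le_rfl]
  have := key ℓ le_rfl
  rw [finrank_UL_zero A (by omega)] at this
  have h0 : zdim L A w ℓ (d - ℓ * e) = 0 := by omega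
  simp [h0]

end Exact

/-! ### Multiderivations and their values on linear forms -/

section Compare
open Module
variable {K : Type*} [Field K] {ℓ : ℕ}

lemma lf_self (φ : Dual K (Fin ℓ → K)) : lf K φ = formPoly φ := by
  rw [lf_eq, Algebra.algebraMap_self, MvPolynomial.map_id]

lemma formPoly_dualB (i : Fin ℓ) : formPoly (dualB K ℓ i) = X i := by
  simp [formPoly, dualB_apply, Pi.single_apply, apply_ite (C (σ := Fin ℓ))]

lemma mem_homFrm_of_basis {L : Type*} [Field L] [Algebra K L] {p d : ℕ} {g : AltFrm K L ℓ p}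
    (h : ∀ j : Fin p → Fin ℓ, (g fun i => dualB K ℓ (j i)).IsHomogeneous d) :
    g ∈ homFrm K L ℓ p d := by
  intro v
  have hv : v = fun i => ∑ k, (dualB K ℓ).repr (v i) k • dualB K ℓ k := by
    ext1 i
    exact ((dualB K ℓ).sum_repr (v i)).symm
  rw [hv, ← AlternatingMap.coe_multilinearMap, MultilinearMap.map_sum]
  refine IsHomogeneous.sum _ _ _ fun r _ => ?_
  rw [MultilinearMap.map_smul_univ g.toMultilinearMap
    (fun i => (dualB K ℓ).repr (v i) (r i)) (fun i => dualB K ℓ (r i)),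
    Algebra.smul_def, IsScalarTower.algebraMap_apply K L (MvPolynomial (Fin ℓ) L),
    MvPolynomial.algebraMap_eq]
  exact (h r).C_mul _

/-- If the values of a multiderivation lie in `I` on all arguments taken from the sets `Q k`, then they
do so for arbitrary arguments in the slots `k ∈ U`, provided `Q k` contains the variables there: the
Leibniz rule reduces polynomials to variables. -/
lemma IsMultiDer.mem_of_forall {p : ℕ}
    {θ : (MvPolynomial (Fin ℓ) K) [⋀^Fin p]→ₗ[K] (MvPolynomial (Fin ℓ) K)} (hθ : IsMultiDer θ)
    (I : Ideal (MvPolynomial (Fin ℓ) K)) (Q : Fin p → Set (MvPolynomial (Fin ℓ) K))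
    (h : ∀ v, (∀ k, v k ∈ Q k) → θ v ∈ I) (U : Finset (Fin p))
    (hQ : ∀ k ∈ U, ∀ n, X n ∈ Q k) (v : Fin p → MvPolynomial (Fin ℓ) K)
    (hv : ∀ k ∉ U, v k ∈ Q k) : θ v ∈ I := by
  induction U using Finset.induction_on generalizing v with
  | empty => exact h v fun k => hv k (Finset.notMem_empty k)
  | insert i U hi ih =>
    suffices hs : ∀ f, θ (Function.update v i f) ∈ I by simpa using hs (v i)
    intro f
    induction f using MvPolynomial.induction_on with
    | C a =>
      have h1 : θ (Function.update v i 1) = 0 := by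
        have := hθ i v 1 1
        simpa using this
      have h2 : (C a : MvPolynomial (Fin ℓ) K) = a • 1 := by
        rw [MvPolynomial.smul_eq_C_mul, mul_one]
      rw [h2, AlternatingMap.map_update_smul, h1, smul_zero]
      exact zero_mem _
    | add f g hf hg =>
      rw [AlternatingMap.map_update_add]
      exact add_mem hf hg
    | mul_X f n hf =>
      rw [hθ]
      refine add_mem (I.mul_mem_left _ (ih (fun k hk => hQ k (Finset.mem_insert_of_mem hk)) _ ?_))
        (I.mul_mem_left _ hf)
      intro k hk
      by_cases hki : k = i
      · subst hki
        simpa using hQ k (Finset.mem_insert_self _ _) n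
      · rw [Function.update_of_ne hki]
        exact hv k (by simp [hki, hk])

/-- The multiderivation `∑_j g(x_{j 1}, …, x_{j p}) ∂_{j 1} ⊗ ⋯ ⊗ ∂_{j p}` extending a form. The sum
over all tuples `j` makes it alternating. -/
def extDer {p : ℕ} (g : AltFrm K K ℓ p) :
    (MvPolynomial (Fin ℓ) K) [⋀^Fin p]→ₗ[K] (MvPolynomial (Fin ℓ) K) :=
  { (∑ j : Fin p → Fin ℓ,
      (LinearMap.mulRight K (g fun i => dualB K ℓ (j i))).compMultilinearMap
        ((MultilinearMap.mkPiAlgebra K (Fin p) (MvPolynomial (Fin ℓ) K)).compLinearMap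
          fun i => (pderiv (j i)).toLinearMap) :
      MultilinearMap K (fun _ : Fin p => MvPolynomial (Fin ℓ) K) (MvPolynomial (Fin ℓ) K)) with
    map_eq_zero_of_eq' := by
      intro v a b hab hne
      simp only [MultilinearMap.toFun_eq_coe, _root_.sum_apply,
        LinearMap.compMultilinearMap_apply, MultilinearMap.compLinearMap_apply,
        MultilinearMap.mkPiAlgebra_apply, LinearMap.mulRight_apply, Derivation.coeFn_coe]
      refine Finset.sum_involution (fun j _ => j ∘ Equiv.swap a b) ?_ ?_
        (fun _ _ => Finset.mem_univ _) (fun j _ => by ext; simp)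
      · intro j _
        have h1 : (fun i => dualB K ℓ ((j ∘ Equiv.swap a b) i)) =
            (fun i => dualB K ℓ (j i)) ∘ Equiv.swap a b := rfl
        rw [h1, g.map_swap _ hne]
        have h2 : ∏ i, (pderiv ((j ∘ Equiv.swap a b) i)) (v i) = ∏ i, (pderiv (j i)) (v i) := by
          rw [← Equiv.prod_comp (Equiv.swap a b)]
          refine Finset.prod_congr rfl fun i _ => ?_
          simp only [Function.comp_apply, Equiv.swap_apply_self]
          congr 1
          rcases eq_or_ne i a with rfl | hia
          · simp [hab]
          · rcases eq_or_ne i b with rfl | hib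
            · simp [hab]
            · rw [Equiv.swap_apply_of_ne_of_ne hia hib]
        rw [h2]
        ring
      · intro j _ hj heq
        apply hj
        rw [g.map_eq_zero_of_eq _ (i := a) (j := b) _ hne, mul_zero]
        have := congrFun heq a
        simp only [Function.comp_apply, Equiv.swap_apply_left] at this
        rw [this] }

lemma extDer_apply {p : ℕ} (g : AltFrm K K ℓ p) (v) :
    extDer g v = ∑ j : Fin p → Fin ℓ, (∏ i, pderiv (j i) (v i)) * g fun i => dualB K ℓ (j i) := by
  change MultilinearMap.toFun _ v = _
  simp [extDer]

lemma extDer_isMultiDer {p : ℕ} (g : AltFrm K K ℓ p) : IsMultiDer (extDer g) := by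
  intro i v f h
  simp only [extDer_apply, Finset.mul_sum, ← Finset.sum_add_distrib]
  refine Finset.sum_congr rfl fun j _ => ?_
  have key : ∀ x, ∏ k, pderiv (j k) (Function.update v i x k) =
      pderiv (j i) x * ∏ k ∈ Finset.univ \ {i}, pderiv (j k) (v k) := by
    intro x
    rw [← Finset.prod_update_of_mem (Finset.mem_univ i)]
    refine Finset.prod_congr rfl fun k _ => ?_
    exact Function.apply_update (fun k => pderiv (j k)) v i x k
  rw [key, key, key, Derivation.leibniz, smul_eq_mul, smul_eq_mul]
  ring

/-- The restriction of an alternating map on polynomials to linear forms. -/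
def resDer {p : ℕ} : ((MvPolynomial (Fin ℓ) K) [⋀^Fin p]→ₗ[K] (MvPolynomial (Fin ℓ) K)) →ₗ[K]
    AltFrm K K ℓ p where
  toFun θ := θ.compLinearMap formPolyₗ
  map_add' _ _ := rfl
  map_smul' _ _ := rfl

lemma resDer_apply {p : ℕ} (θ : (MvPolynomial (Fin ℓ) K) [⋀^Fin p]→ₗ[K] (MvPolynomial (Fin ℓ) K))
    (v) : resDer θ v = θ fun i => formPoly (v i) := rfl

lemma resDer_extDer {p : ℕ} (g : AltFrm K K ℓ p) : resDer (extDer g) = g := by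
  refine Basis.ext_alternating (dualB K ℓ) fun a _ => ?_
  rw [resDer_apply, extDer_apply]
  simp only [formPoly_dualB]
  rw [Finset.sum_eq_single a]
  · simp
  · intro j _ hj
    obtain ⟨k, hk⟩ := Function.ne_iff.1 hj
    rw [Finset.prod_eq_zero (Finset.mem_univ k), zero_mul]
    simp [pderiv_X, Ne.symm hk]
  · simp

/-- Restriction to linear forms identifies the graded pieces of `D^p(A,m)` with those of `DT K A p`. -/
lemma finrank_DpGraded (A : MultiArr K ℓ) (p d : ℕ) :
    finrank K (DpGraded A p d) = finrank K (UL K A p d) := by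
  let f : DpGraded A p d →ₗ[K] UL K A p d :=
    LinearMap.codRestrict _ (resDer.domRestrict (DpGraded A p d)) fun θ => by
      refine ⟨fun φ hφ v i hv => ?_, mem_homFrm_of_basis fun j => ?_⟩
      · rw [lf_self]
        exact θ.2.1.2 φ hφ _ i (congrArg formPoly hv)
      · have := θ.2.2 j
        simp only [LinearMap.domRestrict_apply, resDer_apply, formPoly_dualB]
        exact this
  have hX : ∀ (θ : (MvPolynomial (Fin ℓ) K) [⋀^Fin p]→ₗ[K] (MvPolynomial (Fin ℓ) K))
      (j : Fin p → Fin ℓ), θ (fun i => X (j i)) = resDer θ fun i => dualB K ℓ (j i) := by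
    intro θ j
    simp only [resDer_apply, formPoly_dualB]
  refine LinearEquiv.finrank_eq (LinearEquiv.ofBijective f ⟨?_, ?_⟩)
  · rintro ⟨θ, hθ⟩ ⟨η, hη⟩ h
    have h0 : resDer θ = resDer η := congrArg Subtype.val h
    have h1 : resDer (θ - η) = 0 := by
      ext1 v
      have := congrArg (fun g => g v) h0
      simp only [resDer_apply] at this
      rw [resDer_apply, AlternatingMap.sub_apply, this, sub_self, AlternatingMap.zero_apply]
    apply Subtype.ext
    ext1 v
    have := (sub_mem hθ.1 hη.1 : θ - η ∈ Dp A p).1.mem_of_forall ⊥ (fun _ => Set.range X) ?_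
      Finset.univ (fun _ _ n => ⟨n, rfl⟩) v (by simp)
    · simpa [sub_eq_zero] using this
    · intro v hv
      choose j hj using hv
      obtain rfl : v = fun i => X (j i) := funext fun i => (hj i).symm
      rw [hX, h1]
      exact zero_mem _
  · rintro ⟨g, hg, hgd⟩
    refine ⟨⟨extDer g, ⟨extDer_isMultiDer g, fun φ hφ v i hv => ?_⟩, fun j => ?_⟩,
      Subtype.ext (resDer_extDer g)⟩
    · refine (extDer_isMultiDer g).mem_of_forall _
        (fun k => if k = i then {formPoly φ} else Set.range X) ?_ (Finset.univ.erase i) ?_ v ?_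
      · intro u hu
        have : ∀ k, ∃ c, u k = formPoly c ∧ (k = i → c = φ) := by
          intro k
          have := hu k
          split_ifs at this with hk
          · exact ⟨φ, this, fun _ => rfl⟩
          · obtain ⟨n, hn⟩ := this
            exact ⟨dualB K ℓ n, by rw [formPoly_dualB, hn], fun h => absurd h hk⟩
        choose c hc hci using this
        obtain rfl : u = fun k => formPoly (c k) := funext hc
        rw [← resDer_apply, resDer_extDer, ← lf_self φ]
        exact hg φ hφ c i (hci i rfl)
      · intro k hk n
        rw [if_neg (Finset.ne_of_mem_erase hk)]
        exact ⟨n, rfl⟩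
      · intro k hk
        have : k = i := by simpa using hk
        subst this
        simpa using hv
    · rw [hX, resDer_extDer]
      exact hgd _

end Compare

/-! ### Extension of the base field -/

section BaseChange
open Module
variable {K : Type*} [Field K] {L : Type*} [Field L] [Algebra K L] {ℓ : ℕ}

lemma altFrm_sum_apply {ι : Type*} (s : Finset ι) {p : ℕ} (f : ι → AltFrm K L ℓ p) (v) :
    (∑ i ∈ s, f i) v = ∑ i ∈ s, f i v := by
  let ev : AltFrm K L ℓ p →+ MvPolynomial (Fin ℓ) L := ⟨⟨fun g => g v, rfl⟩, fun _ _ => rfl⟩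
  exact map_sum ev _ _

/-- A `K`-linear functional on `L` applied to the coefficients of a polynomial. -/
def coefMap (π : L →ₗ[K] K) : MvPolynomial (Fin ℓ) L →ₗ[K] MvPolynomial (Fin ℓ) K where
  toFun f := AddMonoidAlgebra.map π.toAddMonoidHom f
  map_add' f g := by
    ext m
    simp
  map_smul' c f := by
    ext m
    simp

@[simp] lemma coeff_coefMap (π : L →ₗ[K] K) (f : MvPolynomial (Fin ℓ) L) (m) :
    coeff m (coefMap π f) = π (coeff m f) := rfl

lemma coefMap_map_mul (π : L →ₗ[K] K) (f : MvPolynomial (Fin ℓ) K) (h : MvPolynomial (Fin ℓ) L) :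
    coefMap π (map (algebraMap K L) f * h) = f * coefMap π h := by
  ext m
  simp only [coeff_coefMap, coeff_mul, map_sum, coeff_map, ← Algebra.smul_def, map_smul,
    smul_eq_mul]

lemma coefMap_C_mul_map (π : L →ₗ[K] K) (c : L) (f : MvPolynomial (Fin ℓ) K) :
    coefMap π (C c * map (algebraMap K L) f) = C (π c) * f := by
  rw [mul_comm, coefMap_map_mul, mul_comm]
  congr 1
  ext m
  rw [coeff_coefMap, coeff_C, coeff_C]
  split_ifs <;> simp

/-- Extension of scalars for alternating forms. -/
def extFrm (p : ℕ) : AltFrm K K ℓ p →ₗ[K] AltFrm K L ℓ p where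
  toFun g := (mapAlgHom (Algebra.ofId K L)).toLinearMap.compAlternatingMap g
  map_add' a b := by ext1 v; simp
  map_smul' a b := by ext1 v; simp

lemma extFrm_apply (p : ℕ) (g : AltFrm K K ℓ p) (v) :
    extFrm (L := L) p g v = map (algebraMap K L) (g v) := rfl

lemma extFrm_mem (A : MultiArr K ℓ) {p d : ℕ} {g : AltFrm K K ℓ p} (hg : g ∈ UL K A p d) :
    extFrm p g ∈ UL L A p d := by
  refine ⟨fun φ hφ v i hv => ?_, fun v => (hg.2 v).map _⟩
  obtain ⟨a, ha⟩ := Ideal.mem_span_singleton'.1 (hg.1 φ hφ v i hv)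
  rw [extFrm_apply, ← ha, map_mul, map_pow, lf_self, ← lf_eq]
  exact Ideal.mul_mem_left _ _ (Ideal.mem_span_singleton_self _)

lemma coefMap_mem (π : L →ₗ[K] K) (A : MultiArr K ℓ) {p d : ℕ} {g : AltFrm K L ℓ p}
    (hg : g ∈ UL L A p d) : (coefMap π).compAlternatingMap g ∈ UL K A p d := by
  refine ⟨fun φ hφ v i hv => ?_, fun v m hm => hg.2 v fun h0 => hm ?_⟩
  · obtain ⟨a, ha⟩ := Ideal.mem_span_singleton'.1 (hg.1 φ hφ v i hv)
    rw [LinearMap.compAlternatingMap_apply, ← ha, lf_self, lf_eq, ← map_pow, mul_comm,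
      coefMap_map_mul]
    exact Ideal.mul_mem_right _ _ (Ideal.mem_span_singleton_self _)
  · rw [LinearMap.compAlternatingMap_apply, coeff_coefMap, h0, map_zero]

lemma extFrm_linearIndependent {ι : Type*} [Fintype ι] {p : ℕ} {b : ι → AltFrm K K ℓ p}
    (hb : LinearIndependent K b) : LinearIndependent L fun i => extFrm (L := L) p (b i) := by
  rw [Fintype.linearIndependent_iff] at hb ⊢
  intro c hc i
  rw [← Module.forall_dual_apply_eq_zero_iff K]
  intro π
  refine hb (fun i => π (c i)) ?_ i
  ext1 v
  have := congrArg (fun g => coefMap π (g v)) hc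
  simp only [altFrm_sum_apply, AlternatingMap.smul_apply, extFrm_apply, smul_eq_C_mul, map_sum,
    coefMap_C_mul_map, AlternatingMap.zero_apply, map_zero] at this ⊢
  exact this

/-- Expanding coefficients in a `K`-basis of `L` writes a form over `L` as a combination of forms over
`K` that satisfy the same divisibility conditions. -/
lemma mem_span_extFrm (A : MultiArr K ℓ) {p d : ℕ} {g : AltFrm K L ℓ p} (hg : g ∈ UL L A p d) :
    g ∈ Submodule.span L ((extFrm (L := L) p) '' (UL K A p d : Set (AltFrm K K ℓ p))) := by
  let b := Basis.ofVectorSpace K L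
  let F : Finset (Basis.ofVectorSpaceIndex K L) :=
    Finset.univ.biUnion fun j : Fin p → Fin ℓ =>
      (g fun i => dualB K ℓ (j i)).support.biUnion fun m =>
        (b.repr (coeff m (g fun i => dualB K ℓ (j i)))).support
  have hsum : g = ∑ β ∈ F, b β • extFrm p ((coefMap (b.coord β)).compAlternatingMap g) := by
    refine Basis.ext_alternating (dualB K ℓ) fun j _ => ?_
    ext m
    simp only [altFrm_sum_apply, AlternatingMap.smul_apply, extFrm_apply, coeff_sum, coeff_smul,
      coeff_map, LinearMap.compAlternatingMap_apply, coeff_coefMap, Basis.coord_apply]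
    by_cases hm : coeff m (g fun i => dualB K ℓ (j i)) = 0
    · simp only [hm, map_zero, Finsupp.zero_apply, smul_zero, Finset.sum_const_zero]
    · conv_lhs => rw [← b.linearCombination_repr (coeff m (g fun i => dualB K ℓ (j i)))]
      rw [Finsupp.linearCombination_apply, Finsupp.sum_of_support_subset (s := F)]
      · refine Finset.sum_congr rfl fun β _ => ?_
        rw [Algebra.smul_def, smul_eq_mul, mul_comm]
      · intro β hβ
        exact Finset.mem_biUnion.2 ⟨j, Finset.mem_univ _, Finset.mem_biUnion.2
          ⟨m, mem_support_iff.2 hm, hβ⟩⟩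
      · simp
  rw [hsum]
  exact Submodule.sum_mem _ fun β _ => Submodule.smul_mem _ _
    (Submodule.subset_span ⟨_, coefMap_mem _ A hg, rfl⟩)

lemma finrank_eq_of_baseChange {M M' : Type*} [AddCommGroup M] [Module K M] [AddCommGroup M']
    [Module L M'] [Module K M'] [IsScalarTower K L M'] (E : M →ₗ[K] M') (P : Submodule K M)
    [FiniteDimensional K P] (Q : Submodule L M') (hEP : ∀ x ∈ P, E x ∈ Q)
    (hQ : Q ≤ Submodule.span L (E '' P))
    (hli : ∀ (n : ℕ) (b : Fin n → M), LinearIndependent K b → LinearIndependent L fun i => E (b i)) :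
    finrank L Q = finrank K P := by
  let b := finBasis K P
  have hb : LinearIndependent K fun i => (b i : M) :=
    b.linearIndependent.map' P.subtype (Submodule.ker_subtype _)
  have hs : Q = Submodule.span L (Set.range fun i => E (b i)) := by
    apply le_antisymm
    · refine hQ.trans (Submodule.span_le.2 ?_)
      rintro _ ⟨h, hh, rfl⟩
      have : h = ∑ i, b.repr ⟨h, hh⟩ i • (b i : M) := by
        have := congrArg P.subtype (b.sum_repr ⟨h, hh⟩)
        rw [map_sum] at this
        exact this.symm
      rw [this, map_sum]
      refine Submodule.sum_mem _ fun i _ => ?_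
      rw [map_smul, ← algebraMap_smul L]
      exact Submodule.smul_mem _ _ (Submodule.subset_span ⟨i, rfl⟩)
    · rw [Submodule.span_le]
      rintro _ ⟨i, rfl⟩
      exact hEP _ (b i).2
  rw [hs, finrank_span_eq_card (hli _ _ hb), Fintype.card_fin]

instance (p : ℕ) : IsScalarTower K L (AltFrm K L ℓ p) :=
  ⟨fun a b g => AlternatingMap.ext fun v => smul_assoc a b (g v)⟩

/-- Extension of scalars preserves the graded dimensions of `D^p(A,m)`. -/
lemma finrank_UL_eq (A : MultiArr K ℓ) (p d : ℕ) :
    finrank L (UL L A p d) = finrank K (UL K A p d) :=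
  finrank_eq_of_baseChange (M := AltFrm K K ℓ p) (M' := AltFrm K L ℓ p) (extFrm p) (UL K A p d)
    (UL L A p d) (fun _ h => extFrm_mem A h) (fun _ h => mem_span_extFrm A h)
    fun _ _ h => extFrm_linearIndependent h

end BaseChange

/-! ### Hilbert series and their specializations -/

section Final
open Module
variable {K : Type*} [Field K] {ℓ : ℕ}

/-- The Hilbert series of `D^p(A,m)` has denominator `(1 - q)^ℓ`. -/
lemma hilb_rational (A : MultiArr K ℓ) (p : ℕ) :
    ∃ f : Polynomial ℤ, Polynomial.coeToPowerSeries.ringHom f =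
      Polynomial.coeToPowerSeries.ringHom ((1 - Polynomial.X : Polynomial ℤ) ^ ℓ) * hilb A p := by
  obtain ⟨f, hf⟩ := hilbertSerre (L := K) (M := AltFrm K K ℓ p) (Finset.univ : Finset (Fin ℓ))
    (N := fun d => UL K A p d) (N' := fun _ => ⊥) (gseq_of p (DT K A p))
    ⟨fun d m hm k => by
        rw [(Submodule.mem_bot K).1 hm, map_zero, ite_self],
      fun d i m hm => by
        rw [(Submodule.mem_bot K).1 hm, smul_zero]
        exact Submodule.zero_mem _⟩
    (fun _ => bot_le) (fun d => inferInstance) (fun i hi => absurd (Finset.mem_univ i) hi)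
  refine ⟨f, ?_⟩
  rw [Polynomial.coeToPowerSeries.ringHom_apply, hf, Finset.card_univ, Fintype.card_fin,
    Polynomial.coeToPowerSeries.ringHom_apply]
  congr 1
  ext d
  simp only [hilb, PowerSeries.coeff_mk, finrank_DpGraded, finrank_bot, Nat.cast_zero, sub_zero]

/-- `∑ H_p (-q^e)^p` is a polynomial for all positive multiples `e` of some `b > 0`. -/
lemma euler_polynomial (A : MultiArr K ℓ) : ∃ b : ℕ, 0 < b ∧ ∀ a : ℕ, ∃ f : Polynomial ℤ,
    Polynomial.coeToPowerSeries.ringHom f = ∑ p ∈ Finset.range (ℓ + 1),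
      hilb A p * (-PowerSeries.X ^ ((a + 1) * b)) ^ p := by
  let L := AlgebraicClosure K
  have : Infinite L := IsAlgClosed.instInfinite
  -- The coordinates are adjoined so that the forms of `B` have no common zero.
  let B : Finset (Dual L (Fin ℓ → L)) :=
    A.duals.image extDual ∪ Finset.univ.image fun i => LinearMap.proj i
  refine ⟨B.card.factorial, Nat.factorial_pos _, fun a => ?_⟩
  obtain ⟨w, hw, hP⟩ := exists_generic_form B
    (fun i => Finset.mem_union_right _ (Finset.mem_image_of_mem _ (Finset.mem_univ i)))
    (a + 1) a.succ_pos
  obtain ⟨D, hD⟩ := euler_zero A w hw B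
    (fun φ hφ => Finset.mem_union_left _ (Finset.mem_image_of_mem _ hφ)) hP
  set e := (a + 1) * B.card.factorial
  refine ⟨PowerSeries.trunc D (∑ p ∈ Finset.range (ℓ + 1), hilb A p * (-PowerSeries.X ^ e) ^ p), ?_⟩
  ext d
  rw [Polynomial.coeToPowerSeries.ringHom_apply, Polynomial.coeff_coe, PowerSeries.coeff_trunc]
  split_ifs with h
  · rfl
  · obtain ⟨h1, h2⟩ := hD d (not_lt.1 h)
    rw [map_sum, ← h2]
    refine Finset.sum_congr rfl fun p hp => ?_
    have hpe : p * e ≤ d := (Nat.mul_le_mul_right _ (by have := Finset.mem_range.1 hp; omega)).trans h1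
    have h3 : hilb A p * (-PowerSeries.X ^ e) ^ p =
        PowerSeries.C ((-1 : ℤ) ^ p) * (hilb A p * PowerSeries.X ^ (p * e)) := by
      rw [neg_pow, ← pow_mul, mul_comm p e, map_pow, map_neg, map_one]
      ring
    rw [h3, PowerSeries.coeff_C_mul, PowerSeries.coeff_mul_X_pow', if_pos hpe, hilb,
      PowerSeries.coeff_mk, finrank_DpGraded, finrank_UL_eq]

end Final

/-- The series `ψ(𝒜,m;t,q) = Σ_{p=0}^{ℓ} H(D^p(𝒜,m),q)·(t(q−1)−1)^p`
is a polynomial in `q` and `t`. -/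
theorem psi_isPolynomial (A : MultiArr K ℓ) :
    ∃ P : Polynomial (Polynomial ℤ),
      P.map Polynomial.coeToPowerSeries.ringHom = psi A := by
  obtain ⟨b, hb, hf⟩ := euler_polynomial A
  -- At `t = -(1 + q + ⋯ + q^(e-1))` with `e = (a+1)b`, the base `(q-1)t - 1` equals `-q^e`.
  refine exists_polynomial_of_evals ℓ
    (fun a => -∑ k ∈ Finset.range ((a + 1) * b), Polynomial.X ^ k) ?_ _ ?_ fun a => ?_
  · intro a a' h
    simp only [Polynomial.eval_neg, Polynomial.eval_finsetSum, Polynomial.eval_pow,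
      Polynomial.eval_X, one_pow, Finset.sum_const, Finset.card_range, neg_inj, nsmul_eq_mul,
      mul_one, Nat.cast_inj] at h
    have := Nat.eq_of_mul_eq_mul_right hb h
    omega
  · choose f hf using fun p => hilb_rational A p
    refine ⟨∑ p ∈ Finset.range (ℓ + 1), Polynomial.C (f p) *
      (Polynomial.C (Polynomial.X - 1) * Polynomial.X - 1) ^ p, ?_⟩
    rw [psi, Polynomial.map_sum, Finset.mul_sum]
    refine Finset.sum_congr rfl fun p _ => ?_
    rw [← mul_assoc, ← Polynomial.C_mul, ← hf p]
    simp
  · obtain ⟨f, hf⟩ := hf a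
    refine ⟨f, ?_⟩
    rw [hf, psi, Polynomial.eval_finsetSum]
    refine Finset.sum_congr rfl fun p _ => ?_
    simp only [Polynomial.eval_mul, Polynomial.eval_pow, Polynomial.eval_sub, Polynomial.eval_C,
      Polynomial.eval_X, Polynomial.eval_one]
    congr 2
    have := mul_geom_sum (PowerSeries.X : PowerSeries ℤ) ((a + 1) * b)
    have h2 : Polynomial.coeToPowerSeries.ringHom
        (-∑ k ∈ Finset.range ((a + 1) * b), (Polynomial.X : Polynomial ℤ) ^ k) =
        -∑ k ∈ Finset.range ((a + 1) * b), (PowerSeries.X : PowerSeries ℤ) ^ k := by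
      rw [map_neg, map_sum]
      simp [map_pow]
    rw [h2, mul_neg, this]
    ring
end
end
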